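/- arXiv:1107.5552 — 2 statements merged into one kernel-verified Lean document; each statement's English description precedes it below -/
import Mathlib

section
/- Let G=(V,D,B) be a mixed graph and (Y_v : v∈V) a family of subsets of V. If, for each node v, the set Y_v satisfies the half-trek criterion with respect to v, and there is a total ordering ≺ on V such that w≺v whenever w∈Y_v∩htr(v), then G is rationally identifiable. -/
open scoped Classical Matrix

/-- A mixed graph `G = (V, D, B)`: a finite vertex set `V`, a set `D` of directed
edges, and a symmetric set `B` of bidirected edges; no self-loops. -/
structure MixedGraph (V : Type*) [Fintype V] [DecidableEq V] where
  D : Finset (V × V)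
  B : Finset (V × V)
  B_symm : ∀ v w : V, (v, w) ∈ B → (w, v) ∈ B
  D_irrefl : ∀ v : V, (v, v) ∉ D
  B_irrefl : ∀ v : V, (v, v) ∉ B

namespace MixedGraph

variable {V : Type*} [Fintype V] [DecidableEq V]

/-- The parents of `v`: nodes `w` with `w → v ∈ D`. -/
def pa (G : MixedGraph V) (v : V) : Finset V :=
  Finset.univ.filter fun w => (w, v) ∈ G.D

/-- The siblings of `v`: nodes `w` with `w ↔ v ∈ B`. -/
def sib (G : MixedGraph V) (v : V) : Finset V :=
  Finset.univ.filter fun w => (w, v) ∈ G.B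

/-- A trek: a walk with no colliding arrowheads.  The field `left` lists the nodes of the
left-hand side from top (head) to source (last); `right` lists the nodes of the right-hand
side from top (head) to target (last); consecutive nodes in each list are joined by directed
edges pointing away from the head.  If `hasBidir` then the two heads are joined by a
bidirected edge, otherwise they coincide (the top node). -/
structure Trek (G : MixedGraph V) where
  left : List V
  right : List V
  left_ne : left ≠ []
  right_ne : right ≠ []
  hasBidir : Bool
  left_chain : left.Chain' fun a b => (a, b) ∈ G.D
  right_chain : right.Chain' fun a b => (a, b) ∈ G.D
  head_cond : if hasBidir then (left.head left_ne, right.head right_ne) ∈ G.B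
              else left.head left_ne = right.head right_ne

namespace Trek

variable {G : MixedGraph V}

/-- The source of a trek. -/
def source (π : G.Trek) : V := π.left.getLast π.left_ne

/-- The target of a trek. -/
def target (π : G.Trek) : V := π.right.getLast π.right_ne

/-- The left-hand side `Left(π)` of a trek, as a set of nodes. -/
def leftSet (π : G.Trek) : Finset V := π.left.toFinset

/-- The right-hand side `Right(π)` of a trek, as a set of nodes. -/
def rightSet (π : G.Trek) : Finset V := π.right.toFinset

/-- A half-trek is a trek whose left-hand side consists of exactly one node. -/
def IsHalfTrek (π : G.Trek) : Prop := π.leftSet.card = 1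

/-- The number of directed edges traversed by the trek. -/
def nEdges (π : G.Trek) : ℕ := (π.left.length - 1) + (π.right.length - 1)

end Trek

/-- `htr v`: the set of nodes `w ∉ {v} ∪ sib(v)` reachable from `v` by a half-trek
containing at least one directed edge. -/
def htr (G : MixedGraph V) (v : V) : Set V :=
  {w | w ≠ v ∧ w ∉ G.sib v ∧
    ∃ π : G.Trek, π.source = v ∧ π.target = w ∧ π.IsHalfTrek ∧ 1 ≤ π.nEdges}

/-- `f` encodes a system of treks from `Y` to `P`: treks with pairwise distinct sources
forming `Y` and pairwise distinct targets forming `P`. -/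
def IsTrekSystem (G : MixedGraph V) (Y P : Finset V) (f : V → G.Trek) : Prop :=
  (∀ y ∈ Y, (f y).source = y) ∧
  (Y.image fun y => (f y).target) = P ∧
  ∀ y ∈ Y, ∀ y' ∈ Y, y ≠ y' → (f y).target ≠ (f y').target

/-- The treks `f y`, `y ∈ Y`, have no sided intersection. -/
def NoSidedIntersection (G : MixedGraph V) (Y : Finset V) (f : V → G.Trek) : Prop :=
  ∀ y ∈ Y, ∀ y' ∈ Y, y ≠ y' →
    Disjoint (f y).leftSet (f y').leftSet ∧ Disjoint (f y).rightSet (f y').rightSet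

/-- `Y` satisfies the half-trek criterion with respect to `v`. -/
def SatisfiesHTC (G : MixedGraph V) (v : V) (Y : Finset V) : Prop :=
  Y.card = (G.pa v).card ∧
  (∀ y ∈ Y, y ≠ v ∧ y ∉ G.sib v) ∧
  ∃ f : V → G.Trek, (∀ y ∈ Y, (f y).IsHalfTrek) ∧
    G.IsTrekSystem Y (G.pa v) f ∧ G.NoSidedIntersection Y f

/-- `Y` satisfies the weak half-trek criterion with respect to `v`. -/
def SatisfiesWeakHTC (G : MixedGraph V) (v : V) (Y : Finset V) : Prop :=
  Y.card = (G.pa v).card ∧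
  (∀ y ∈ Y, y ≠ v ∧ y ∉ G.sib v) ∧
  ∃ f : V → G.Trek, (∀ y ∈ Y, y ∈ G.htr v → (f y).IsHalfTrek) ∧
    G.IsTrekSystem Y (G.pa v) f ∧ G.NoSidedIntersection Y f

/-- `G` is HTC-identifiable. -/
def HTCIdentifiable (G : MixedGraph V) : Prop :=
  ∃ Y : V → Finset V,
    (∀ v, G.SatisfiesHTC v (Y v)) ∧
    ∃ r : V → V → Prop, IsStrictTotalOrder V r ∧
      ∀ v w, w ∈ Y v → w ∈ G.htr v → r w v

/-- `G` is HTC-infinite-to-one. -/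
def HTCInfiniteToOne (G : MixedGraph V) : Prop :=
  ∀ Y : V → Finset V,
    (∃ v, ¬ G.SatisfiesHTC v (Y v)) ∨ ∃ v w, v ∈ Y w ∧ w ∈ Y v

/-- `G` is acyclic: no directed cycle can be formed from the edges in `D`. -/
def Acyclic (G : MixedGraph V) : Prop :=
  ∀ v : V, ¬ Relation.TransGen (fun a b => (a, b) ∈ G.D) v v

/-- `G` is simple: at most one edge between any pair of nodes. -/
def Simple (G : MixedGraph V) : Prop :=
  (∀ e ∈ G.D, e ∉ G.B) ∧ ∀ v w : V, (v, w) ∈ G.D → (w, v) ∉ G.D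

/-- `ℝ^D_reg`: real matrices supported on `D` with `I - Λ` invertible. -/
def RDreg (G : MixedGraph V) : Set (Matrix V V ℝ) :=
  {Λ | (∀ v w, (v, w) ∉ G.D → Λ v w = 0) ∧ IsUnit (1 - Λ).det}

/-- `PD(B)`: positive definite symmetric matrices supported on the diagonal and `B`. -/
def PDB (G : MixedGraph V) : Set (Matrix V V ℝ) :=
  {Ω | Ω.PosDef ∧ ∀ v w, v ≠ w → (v, w) ∉ G.B → Ω v w = 0}

/-- The parameter space `Θ = ℝ^D_reg × PD(B)`. -/
def Theta (G : MixedGraph V) : Set (Matrix V V ℝ × Matrix V V ℝ) :=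
  {θ | θ.1 ∈ G.RDreg ∧ θ.2 ∈ G.PDB}

/-- The parametrization `φ(Λ, Ω) = (I-Λ)^{-T} Ω (I-Λ)^{-1}`. -/
noncomputable def phi {R : Type*} [CommRing R] (Λ Ω : Matrix V V R) : Matrix V V R :=
  ((1 - Λ)⁻¹)ᵀ * Ω * (1 - Λ)⁻¹

/-- Evaluation of a polynomial in the coordinates `λ_vw` (left summand) and `ω_vw`
(right summand) at a parameter point `θ = (Λ, Ω)`. -/
noncomputable def evalParam (θ : Matrix V V ℝ × Matrix V V ℝ)
    (p : MvPolynomial ((V × V) ⊕ (V × V)) ℝ) : ℝ :=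
  MvPolynomial.eval (Sum.elim (fun e => θ.1 e.1 e.2) (fun e => θ.2 e.1 e.2)) p

/-- `V₀` is a proper algebraic subset of `Θ`: the intersection with `Θ` of the zero set of a
polynomial in the coordinates that does not vanish identically on `Θ`. -/
def IsProperAlgebraic (G : MixedGraph V)
    (V₀ : Set (Matrix V V ℝ × Matrix V V ℝ)) : Prop :=
  ∃ p : MvPolynomial ((V × V) ⊕ (V × V)) ℝ,
    (∃ θ ∈ G.Theta, evalParam θ p ≠ 0) ∧
    V₀ = {θ ∈ G.Theta | evalParam θ p = 0}

/-- Evaluation of a polynomial in the entries of a covariance matrix. -/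
noncomputable def evalAtCov (S : Matrix V V ℝ) (p : MvPolynomial (V × V) ℝ) : ℝ :=
  MvPolynomial.eval (fun e => S e.1 e.2) p

/-- `G` is rationally identifiable: some rational map `ψ` (each coordinate a quotient of
polynomials in the entries of the covariance matrix) satisfies `ψ ∘ φ_G = id` off a proper
algebraic subset of `Θ`. -/
def RationallyIdentifiable (G : MixedGraph V) : Prop :=
  ∃ V₀, G.IsProperAlgebraic V₀ ∧
    ∃ p q : ((V × V) ⊕ (V × V)) → MvPolynomial (V × V) ℝ,
      ∀ θ ∈ G.Theta \ V₀,
        (∀ i, evalAtCov (phi θ.1 θ.2) (q i) ≠ 0) ∧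
        (∀ v w : V, θ.1 v w * evalAtCov (phi θ.1 θ.2) (q (Sum.inl (v, w)))
            = evalAtCov (phi θ.1 θ.2) (p (Sum.inl (v, w)))) ∧
        (∀ v w : V, θ.2 v w * evalAtCov (phi θ.1 θ.2) (q (Sum.inr (v, w)))
            = evalAtCov (phi θ.1 θ.2) (p (Sum.inr (v, w))))

/-- `G` is generically identifiable: `φ_G` is injective off a proper algebraic subset. -/
def GenericallyIdentifiable (G : MixedGraph V) : Prop :=
  ∃ V₀, G.IsProperAlgebraic V₀ ∧
    Set.InjOn (fun θ : Matrix V V ℝ × Matrix V V ℝ => phi θ.1 θ.2) (G.Theta \ V₀)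

/-- `φ_G` is generically infinite-to-one. -/
def GenInfiniteToOne (G : MixedGraph V) : Prop :=
  ∃ V₀, G.IsProperAlgebraic V₀ ∧
    ∀ θ ∈ G.Theta \ V₀,
      {θ' ∈ G.Theta | phi θ'.1 θ'.2 = phi θ.1 θ.2}.Infinite

end MixedGraph

namespace MixedGraph
section HTCProof

set_option linter.unusedSectionVars false

variable {V : Type*} [Fintype V] [DecidableEq V]

/-- Shorten a chain to a duplicate-free one. -/
lemma exists_nodup_chain {D : V → V → Prop} (l : List V) (hl : l ≠ [])
    (hc : l.IsChain D) :
    ∃ l' : List V, l'.IsChain D ∧ l'.Nodup ∧ (∀ u ∈ l', u ∈ l) ∧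
      l'.head? = l.head? ∧ l'.getLast? = l.getLast? := by
  induction l with
  | nil => exact absurd rfl hl
  | cons a l ih =>
    rcases l with _ | ⟨b, l⟩
    · exact ⟨[a], by simp, by simp, by simp, by simp, by simp⟩
    · have hc2 := (List.isChain_cons_cons.1 hc)
      obtain ⟨l', h1, h2, h3, h4, h5⟩ := ih (by simp) hc2.2
      by_cases ha : a ∈ l'
      · obtain ⟨s, t, rfl⟩ := List.append_of_mem ha
        refine ⟨a :: t, ?_, ?_, ?_, ?_, ?_⟩
        · exact (List.isChain_append.1 h1).2.1
        · exact (List.nodup_append.1 h2).2.1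
        · intro u hu
          exact List.mem_cons_of_mem _ (h3 u (List.mem_append_right _ hu))
        · simp
        · rw [List.getLast?_append] at h5
          simp only [List.getLast?_cons_cons] at h5 ⊢
          rw [← h5]
          cases h : (a :: t).getLast? with
          | none => simp at h
          | some x => simp
      · refine ⟨a :: l', ?_, ?_, ?_, ?_, ?_⟩
        · rw [List.isChain_cons]
          refine ⟨?_, h1⟩
          intro y hy
          rw [h4] at hy
          simp at hy
          rw [← hy]; exact hc2.1
        · exact List.nodup_cons.2 ⟨ha, h2⟩
        · intro u hu
          rcases List.mem_cons.1 hu with h | h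
          · simp [h]
          · exact List.mem_cons_of_mem _ (h3 u h)
        · simp
        · rw [List.getLast?_cons_cons, ← h5]
          rcases l' with _ | ⟨c, l'⟩
          · simp at h4
          · rw [List.getLast?_cons_cons]

/-- A system of duplicate-free directed paths, the right sides of a half-trek system. -/
structure Sys (G : MixedGraph V) (Y P : Finset V) (R : Y → List V) : Prop where
  chain : ∀ i, (R i).IsChain fun a b => (a, b) ∈ G.D
  nodup : ∀ i, (R i).Nodup
  head : ∀ i, ∃ a, (R i).head? = some a ∧ (a = i ∨ ((i : V), a) ∈ G.B)
  disj : ∀ i j u, u ∈ R i → u ∈ R j → i = j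
  last : ∀ w, w ∈ P ↔ ∃ i, (R i).getLast? = some w

lemma exists_sys (G : MixedGraph V) (v : V) (Y : Finset V) (h : G.SatisfiesHTC v Y) :
    ∃ R, Sys G Y (G.pa v) R := by
  obtain ⟨_, _, f, hf, ⟨hs, ht, _⟩, hn⟩ := h
  have key : ∀ i : Y, ∃ l' : List V, (l'.IsChain fun a b => (a, b) ∈ G.D) ∧ l'.Nodup ∧
      (∀ u ∈ l', u ∈ (f i).right) ∧
      l'.head? = (f i).right.head? ∧ l'.getLast? = (f i).right.getLast? := fun i =>
    exists_nodup_chain (f i).right (f i).right_ne (f i).right_chain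
  choose R h1 h2 h3 h4 h5 using key
  refine ⟨R, h1, h2, ?_, ?_, ?_⟩
  · intro i
    refine ⟨(f i).right.head (f i).right_ne, ?_, ?_⟩
    · rw [h4, List.head?_eq_some_head]
    · have hc := (f i).head_cond
      have hl : (f i).left.head (f i).left_ne = i := by
        have := hf i i.2
        obtain ⟨x, hx⟩ := Finset.card_eq_one.1 this
        have e1 : (f i).left.head (f i).left_ne ∈ (f i).leftSet := by
          simp [Trek.leftSet]
        have e2 : (f i).source ∈ (f i).leftSet := by
          simp [Trek.leftSet, Trek.source]
        rw [hx, Finset.mem_singleton] at e1 e2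
        rw [e1, ← e2, hs i i.2]
      rw [hl] at hc
      split_ifs at hc with hb
      · exact Or.inr hc
      · exact Or.inl hc.symm
  · intro i j u hi hj
    by_contra hij
    have := (hn i i.2 j j.2 (fun e => hij (Subtype.ext e))).2
    have e1 : u ∈ (f i).rightSet := by simpa [Trek.rightSet] using h3 _ _ hi
    have e2 : u ∈ (f j).rightSet := by simpa [Trek.rightSet] using h3 _ _ hj
    exact Finset.disjoint_left.1 this e1 e2
  · intro w
    rw [← ht]
    simp only [Finset.mem_image, Subtype.exists, h5]
    constructor
    · rintro ⟨y, hy, rfl⟩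
      exact ⟨y, hy, by simp [Trek.target, List.getLast?_eq_some_getLast (f y).right_ne]⟩
    · rintro ⟨y, hy, he⟩
      refine ⟨y, hy, ?_⟩
      rw [List.getLast?_eq_some_getLast (f y).right_ne] at he
      simpa [Trek.target] using he

/-- Weight of a path. -/
noncomputable def wt {Y : Finset V} (R : Y → List V) (i : Y) : ℕ :=
  (R i).length + if (R i).head? = some (i : V) then 0 else 1

/-- The path containing the node `i`. -/
noncomputable def nxt {Y : Finset V} (R : Y → List V) (i : Y) : Y :=
  if h : ∃ j, (i : V) ∈ R j then h.choose else i

lemma nxt_mem {Y : Finset V} (R : Y → List V) (i : Y) (h : ∃ j, (i : V) ∈ R j) :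
    (i : V) ∈ R (nxt R i) := by
  unfold nxt
  rw [dif_pos h]
  exact h.choose_spec

lemma head_of_mem {l : List V} {a : V} (h : a ∈ l) : (l.drop (l.idxOf a)).head? = some a := by
  have := List.idxOf_lt_length_of_mem h
  rw [List.head?_drop, List.getElem?_eq_getElem this]
  simp

lemma exists_min_sys (G : MixedGraph V) (Y P : Finset V) (h : ∃ R, Sys G Y P R) :
    ∃ R, Sys G Y P R ∧ ∀ i ∈ Function.periodicPts (nxt R), (∃ j, (i : V) ∈ R j) →
      nxt R i = i ∧ (R i).head? = some (i : V) := by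
  let Q : ℕ → Prop := fun n => ∃ R, Sys G Y P R ∧ ∑ i, wt R i = n
  have hQ : ∃ n, Q n := by
    obtain ⟨R, hR⟩ := h
    exact ⟨_, R, hR, rfl⟩
  obtain ⟨R, hR, hn⟩ := Nat.find_spec hQ
  have hmin : ∀ R', Sys G Y P R' → ∑ i, wt R i ≤ ∑ i, wt R' i := fun R' hR' => by
    rw [hn]
    exact Nat.find_min' hQ ⟨R', hR', rfl⟩
  clear hn
  refine ⟨R, hR, ?_⟩
  set g := nxt R with hg
  let C := Function.periodicPts g
  have hC : Set.BijOn g C C := Function.bijOn_periodicPts g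
  let τ : Y → Y := fun i => if i ∈ C then g i else i
  have hτ : Function.Bijective τ := by
    apply Finite.injective_iff_bijective.1
    intro i j hij
    simp only [τ] at hij
    split_ifs at hij with h1 h2 h2
    · exact hC.injOn h1 h2 hij
    · exact absurd (hij ▸ hC.mapsTo h1) h2
    · exact absurd (hij ▸ hC.mapsTo h2) h1
    · exact hij
  let R' : Y → List V := fun i =>
    if i ∈ C ∧ ∃ j, (i : V) ∈ R j then (R (g i)).drop ((R (g i)).idxOf (i : V)) else R i
  have hR'τ : ∀ i, ∃ k, k < (R (τ i)).length ∧ R' i = (R (τ i)).drop k := by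
    intro i
    by_cases hi : i ∈ C ∧ ∃ j, (i : V) ∈ R j
    · have hm : (i : V) ∈ R (g i) := nxt_mem R i hi.2
      refine ⟨(R (g i)).idxOf (i : V), ?_, ?_⟩
      · simp only [τ, if_pos hi.1]
        exact List.idxOf_lt_length_of_mem hm
      · simp only [τ, R', if_pos hi.1, if_pos hi]
    · have hti : τ i = i := by
        simp only [τ]
        split_ifs with h1
        · have : ¬ ∃ j, (i : V) ∈ R j := fun h2 => hi ⟨h1, h2⟩
          rw [hg]; unfold nxt; rw [dif_neg this]
        · rfl
      refine ⟨0, ?_, ?_⟩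
      · rw [hti]
        obtain ⟨a, ha, _⟩ := hR.head i
        rcases hl : R i with _ | _
        · simp [hl] at ha
        · simp
      · rw [hti]; simp only [R', if_neg hi, List.drop_zero]
  have hlast : ∀ i, (R' i).getLast? = (R (τ i)).getLast? := by
    intro i
    obtain ⟨k, hk, he⟩ := hR'τ i
    rw [he, List.getLast?_drop, if_neg (by omega)]
  have hmem : ∀ i u, u ∈ R' i → u ∈ R (τ i) := by
    intro i u hu
    obtain ⟨k, hk, he⟩ := hR'τ i
    rw [he] at hu
    exact List.mem_of_mem_drop hu
  have hS' : Sys G Y P R' := by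
    refine ⟨?_, ?_, ?_, ?_, ?_⟩
    · intro i
      obtain ⟨k, hk, he⟩ := hR'τ i
      rw [he]; exact (hR.chain _).drop k
    · intro i
      obtain ⟨k, hk, he⟩ := hR'τ i
      rw [he]; exact (hR.nodup _).sublist (List.drop_sublist _ _)
    · intro i
      by_cases hi : i ∈ C ∧ ∃ j, (i : V) ∈ R j
      · refine ⟨i, ?_, Or.inl rfl⟩
        simp only [R', if_pos hi]
        exact head_of_mem (nxt_mem R i hi.2)
      · simp only [R', if_neg hi]
        exact hR.head i
    · intro i j u hi hj
      exact hτ.1 (hR.disj _ _ u (hmem i u hi) (hmem j u hj))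
    · intro w
      rw [hR.last w]
      constructor
      · rintro ⟨i, hi⟩
        obtain ⟨j, rfl⟩ := hτ.2 i
        exact ⟨j, by rw [hlast, hi]⟩
      · rintro ⟨i, hi⟩
        exact ⟨τ i, by rw [← hlast, hi]⟩
  have hle : ∀ i, wt R' i ≤ wt R (τ i) ∧ (i ∈ C → (∃ j, (i : V) ∈ R j) →
      wt R' i = wt R (τ i) → g i = i ∧ (R i).head? = some (i : V)) := by
    intro i
    by_cases hi : i ∈ C ∧ ∃ j, (i : V) ∈ R j
    · have hm : (i : V) ∈ R (g i) := nxt_mem R i hi.2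
      have e1 : R' i = (R (g i)).drop ((R (g i)).idxOf (i : V)) := by simp only [R', if_pos hi]
      have e2 : τ i = g i := by simp only [τ, if_pos hi.1]
      have e3 : (R' i).head? = some (i : V) := by rw [e1]; exact head_of_mem hm
      have hk := List.idxOf_lt_length_of_mem hm
      have e4 : wt R' i = (R (g i)).length - (R (g i)).idxOf (i : V) := by
        unfold wt; rw [if_pos e3, e1, List.length_drop, add_zero]
      rw [e4, e2]
      unfold wt
      refine ⟨by omega, fun _ _ heq => ?_⟩
      split_ifs at heq with h5
      · have h0 : (R (g i)).idxOf (i : V) = 0 := by omega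
        have h6 := head_of_mem hm
        rw [h0, List.drop_zero, h5] at h6
        have h7 : g i = i := Subtype.ext (Option.some.inj h6)
        rw [h7] at h5
        exact ⟨h7, h5⟩
      · omega
    · have e1 : R' i = R i := by simp only [R', if_neg hi]
      have hti : τ i = i := by
        simp only [τ]
        split_ifs with h1
        · have : ¬ ∃ j, (i : V) ∈ R j := fun h2 => hi ⟨h1, h2⟩
          rw [hg]; unfold nxt; rw [dif_neg this]
        · rfl
      refine ⟨?_, fun h1 h2 => absurd ⟨h1, h2⟩ hi⟩
      rw [hti]; unfold wt; rw [e1]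
  have hsum : ∑ i, wt R (τ i) = ∑ i, wt R i := hτ.sum_comp (wt R)
  have heq : ∀ i ∈ Finset.univ, wt R' i = wt R (τ i) := by
    apply (Finset.sum_eq_sum_iff_of_le (fun i _ => (hle i).1)).1
    apply le_antisymm (Finset.sum_le_sum (fun i _ => (hle i).1))
    rw [hsum]; exact hmin R' hS'
  exact fun i hi hj => (hle i).2 hi hj (heq i (Finset.mem_univ i))

lemma exists_dep (G : MixedGraph V) (Y P : Finset V) (h : ∃ R, Sys G Y P R) :
    ∃ R, Sys G Y P R ∧ ∃ dep : Y → ℕ, ∀ i l : Y, (i : V) ∈ R l →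
      (l = i ∧ (R i).head? = some (i : V)) ∨ dep i = dep l + 1 := by
  obtain ⟨R, hR, hp⟩ := exists_min_sys G Y P h
  refine ⟨R, hR, ?_⟩
  set g := nxt R with hg
  have hfix : ∀ i ∈ Function.periodicPts g, g i = i := by
    intro i hi
    by_cases hj : ∃ j, (i : V) ∈ R j
    · exact (hp i hi hj).1
    · rw [hg]; unfold nxt; rw [dif_neg hj]
  have hex : ∀ i, ∃ n, g (g^[n] i) = g^[n] i := by
    intro i
    obtain ⟨m, n, hmn, he⟩ := Finite.exists_ne_map_eq_of_infinite (fun n => g^[n] i)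
    wlog hlt : m < n generalizing m n
    · exact this n m hmn.symm he.symm (by omega)
    refine ⟨m, hfix _ ⟨n - m, by omega, ?_⟩⟩
    show g^[n - m] (g^[m] i) = g^[m] i
    rw [← Function.iterate_add_apply, Nat.sub_add_cancel hlt.le]
    exact he.symm
  refine ⟨fun i => Nat.find (hex i), ?_⟩
  intro i l hil
  have hgl : g i = l := hR.disj _ _ _ (nxt_mem R i ⟨l, hil⟩) hil
  by_cases hli : g i = i
  · left
    refine ⟨by rw [← hgl, hli], (hp i ⟨1, by omega, ?_⟩ ⟨l, hil⟩).2⟩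
    exact hli
  · right
    subst hgl
    show Nat.find (hex i) = Nat.find (hex (g i)) + 1
    apply Nat.find_comp_succ
    exact hli

end HTCProof
end MixedGraph
namespace MixedGraph
section HTCProof

set_option linter.unusedSectionVars false

variable {V : Type*} [Fintype V] [DecidableEq V]

/-- Edge matrix of a labelled path system. -/
noncomputable def sL {α : Type*} (lab : V → α) (pos : V → ℕ) : Matrix V V ℝ :=
  Matrix.of fun a b => if lab a = lab b ∧ pos b = pos a + 1 then 1 else 0

/-- Path matrix of a labelled path system. -/
noncomputable def sN {α : Type*} (lab : V → α) (pos : V → ℕ) : Matrix V V ℝ :=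
  Matrix.of fun a b => if lab a = lab b ∧ pos a ≤ pos b then 1 else 0

/-- Matrix of connections between sources and tops. -/
noncomputable def sO {ι : Type*} (y T : ι → V) : Matrix V V ℝ :=
  Matrix.of fun a b => if ∃ m, (a = y m ∧ b = T m) ∨ (a = T m ∧ b = y m) then 1 else 0

lemma sL_mul {α : Type*} (lab : V → α) (pos : V → ℕ)
    (hinj : ∀ a b, lab a = lab b → pos a = pos b → a = b)
    (hgap : ∀ a b, lab a = lab b → pos a < pos b → ∃ c, lab c = lab a ∧ pos c = pos a + 1) :
    (1 - sL lab pos) * sN lab pos = 1 := by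
  ext a b
  rw [sub_mul, one_mul, Matrix.sub_apply, Matrix.mul_apply]
  simp only [sL, sN, Matrix.of_apply, Matrix.one_apply]
  by_cases h : lab a = lab b ∧ pos a < pos b
  · obtain ⟨c, hc1, hc2⟩ := hgap a b h.1 h.2
    rw [Finset.sum_eq_single c]
    · have : a ≠ b := by rintro rfl; exact absurd h.2 (lt_irrefl _)
      rw [if_pos ⟨h.1, h.2.le⟩, if_pos ⟨hc1.symm, hc2⟩, if_pos ⟨hc1.trans h.1, by omega⟩,
        if_neg this]
      norm_num
    · intro d _ hd
      rw [if_neg, zero_mul]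
      rintro ⟨h1, h2⟩
      exact hd (hinj _ _ (h1.symm.trans hc1.symm) (by omega))
    · intro hc; exact absurd (Finset.mem_univ c) hc
  · rw [Finset.sum_eq_zero, sub_zero]
    · by_cases hab : a = b
      · subst hab; simp
      · rw [if_neg hab, if_neg]
        rintro ⟨h1, h2⟩
        rcases h2.lt_or_eq with h3 | h3
        · exact h ⟨h1, h3⟩
        · exact hab (hinj _ _ h1 h3)
    · intro d _
      by_contra hne
      have h1 := left_ne_zero_of_mul hne
      have h2 := right_ne_zero_of_mul hne
      simp only [ne_eq, ite_eq_right_iff, one_ne_zero, imp_false, not_not] at h1 h2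
      exact h ⟨h1.1.trans h2.1, by omega⟩

lemma sN_nonneg {α : Type*} (lab : V → α) (pos : V → ℕ) (a b : V) : 0 ≤ sN lab pos a b := by
  simp only [sN, Matrix.of_apply]; split_ifs <;> norm_num

lemma sO_nonneg {ι : Type*} (y T : ι → V) (a b : V) : 0 ≤ sO y T a b := by
  simp only [sO, Matrix.of_apply]; split_ifs <;> norm_num

lemma half_le_full {α ι : Type*} (lab : V → α) (pos : V → ℕ) (y T : ι → V) (a b : V) :
    (sO y T * sN lab pos) a b ≤ ((sN lab pos)ᵀ * sO y T * sN lab pos) a b := by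
  have hnn : ∀ c d, 0 ≤ (sO y T * sN lab pos) c d := fun c d => by
    rw [Matrix.mul_apply]
    exact Finset.sum_nonneg fun e _ => mul_nonneg (sO_nonneg _ _ _ _) (sN_nonneg _ _ _ _)
  rw [Matrix.mul_assoc, Matrix.mul_apply (M := (sN lab pos)ᵀ)]
  have h1 : (sN lab pos)ᵀ a a = 1 := by simp [sN]
  calc _ = (sN lab pos)ᵀ a a * (sO y T * sN lab pos) a b := by rw [h1, one_mul]
    _ ≤ _ := Finset.single_le_sum
      (f := fun c => (sN lab pos)ᵀ a c * (sO y T * sN lab pos) c b)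
      (fun c _ => mul_nonneg (sN_nonneg _ _ _ _) (hnn _ _)) (Finset.mem_univ a)

lemma full_ne_zero {α ι : Type*} (lab : V → α) (pos : V → ℕ) (y T : ι → V) (u w : V)
    (h : ((sN lab pos)ᵀ * sO y T * sN lab pos) u w ≠ 0) :
    ∃ a b m, lab a = lab u ∧ pos a ≤ pos u ∧ lab b = lab w ∧
      ((a = y m ∧ b = T m) ∨ (a = T m ∧ b = y m)) := by
  rw [Matrix.mul_apply] at h
  obtain ⟨b, _, hb⟩ := Finset.exists_ne_zero_of_sum_ne_zero h
  have hb1 := left_ne_zero_of_mul hb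
  have hb2 := right_ne_zero_of_mul hb
  rw [Matrix.mul_apply] at hb1
  obtain ⟨a, _, ha⟩ := Finset.exists_ne_zero_of_sum_ne_zero hb1
  have ha1 := left_ne_zero_of_mul ha
  have ha2 := right_ne_zero_of_mul ha
  simp only [sN, sO, Matrix.of_apply, Matrix.transpose_apply, ne_eq, ite_eq_right_iff,
    one_ne_zero, imp_false, not_not] at hb2 ha1 ha2
  obtain ⟨m, hm⟩ := ha2
  exact ⟨a, b, m, ha1.1, ha1.2, hb2.1, hm⟩

lemma det_ne_zero_of_key {ι : Type*} [Fintype ι] [DecidableEq ι] (A : Matrix ι ι ℝ)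
    (key : ι → ℕ ×ₗ ℕ) (hd : ∀ i, A i i ≠ 0)
    (ht : ∀ i j, A i j ≠ 0 → j = i ∨ key j < key i) : A.det ≠ 0 := by
  intro h0
  obtain ⟨c, hc, hAc⟩ := Matrix.exists_mulVec_eq_zero_iff.2 h0
  apply hc
  have : ∀ k i, key i = k → c i = 0 := by
    intro k
    induction k using WellFoundedLT.induction with
    | ind k ih =>
      intro i hi
      have h1 := congrFun hAc i
      rw [Matrix.mulVec, dotProduct, Finset.sum_eq_single i] at h1
      · simpa [hd i] using h1
      · intro j _ hj
        by_cases hA : A i j = 0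
        · rw [hA, zero_mul]
        · rcases ht i j hA with h2 | h2
          · exact absurd h2 hj
          · rw [ih (key j) (hi ▸ h2) j rfl, mul_zero]
      · intro hc; exact absurd (Finset.mem_univ i) hc
  funext i
  exact this _ i rfl

lemma special_det {ι : Type*} [Fintype ι] [DecidableEq ι] (lab : V → ι ⊕ V) (pos : V → ℕ)
    (y T p : ι → V) (hy : Function.Injective y)
    (hinj : ∀ a b, lab a = lab b → pos a = pos b → a = b)
    (hT : ∀ i, lab (T i) = Sum.inl i) (hT0 : ∀ i, pos (T i) = 0)
    (hp : ∀ i, lab (p i) = Sum.inl i) (hr : ∀ a u, lab a = Sum.inr u → a = u)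
    (dep : ι → ℕ) (hdep : ∀ i l, lab (y i) = Sum.inl l → (l = i ∧ y i = T i) ∨
      dep i = dep l + 1) (H : ι → Prop) :
    (Matrix.of fun i j => if H i then (sO y T * sN lab pos) (y i) (p j)
      else ((sN lab pos)ᵀ * sO y T * sN lab pos) (y i) (p j)).det ≠ 0 := by
  have hnn : ∀ c d, 0 ≤ (sO y T * sN lab pos) c d := fun c d => by
    rw [Matrix.mul_apply]
    exact Finset.sum_nonneg fun e _ => mul_nonneg (sO_nonneg _ _ _ _) (sN_nonneg _ _ _ _)
  apply det_ne_zero_of_key _ (fun i => toLex (dep i, pos (y i)))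
  · intro i
    have h1 : 0 < (sO y T * sN lab pos) (y i) (p i) := by
      rw [Matrix.mul_apply]
      apply Finset.sum_pos'
      · exact fun e _ => mul_nonneg (sO_nonneg _ _ _ _) (sN_nonneg _ _ _ _)
      · refine ⟨T i, Finset.mem_univ _, ?_⟩
        have e1 : sO y T (y i) (T i) = 1 := by
          simp only [sO, Matrix.of_apply]; exact if_pos ⟨i, Or.inl ⟨rfl, rfl⟩⟩
        have e2 : sN lab pos (T i) (p i) = 1 := by
          simp only [sN, Matrix.of_apply]
          exact if_pos ⟨by rw [hT, hp], by rw [hT0]; omega⟩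
        rw [e1, e2]; norm_num
    rw [Matrix.of_apply]
    split_ifs
    · exact h1.ne'
    · exact (h1.trans_le (half_le_full _ _ _ _ _ _)).ne'
  · intro i j hij
    have hF : ((sN lab pos)ᵀ * sO y T * sN lab pos) (y i) (p j) ≠ 0 := by
      rw [Matrix.of_apply] at hij
      split_ifs at hij
      · exact (((hnn _ _).lt_of_ne hij.symm).trans_le (half_le_full _ _ _ _ _ _)).ne'
      · exact hij
    obtain ⟨a, b, m, h1, h2, h3, h4⟩ := full_ne_zero _ _ _ _ _ _ hF
    rw [hp] at h3
    rw [Prod.Lex.toLex_lt_toLex]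
    rcases h4 with ⟨rfl, rfl⟩ | ⟨rfl, rfl⟩
    · rw [hT] at h3
      obtain rfl : m = j := Sum.inl.inj h3
      have hsame : pos (y m) = pos (y i) → m = i := fun h => hy (hinj _ _ h1 h)
      rcases hl : lab (y i) with l | u
      · rcases hdep i l hl with ⟨_, h6⟩ | h6
        · left
          apply hsame
          rw [h6, hT0] at h2 ⊢
          omega
        · rcases hdep m l (h1.trans hl) with ⟨h7, _⟩ | h7
          · subst h7; right; left; show dep l < dep i; omega
          · rcases h2.lt_or_eq with h8 | h8
            · right; right
              exact ⟨by show dep m = dep i; omega, h8⟩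
            · left; exact hsame h8
      · left
        apply hy
        rw [hr _ _ hl, hr _ _ (h1.trans hl)]
    · rw [hT] at h1
      have key1 := hdep i m h1.symm
      have key2 := hdep m j h3
      simp only
      by_cases hji : j = i
      · exact Or.inl hji
      · right; left
        rcases key1 with ⟨k1, _⟩ | k1 <;> rcases key2 with ⟨k2, _⟩ | k2
        · exact absurd (k2.trans k1) hji
        · subst k1; omega
        · subst k2; omega
        · omega

end HTCProof
end MixedGraph
namespace MixedGraph
section HTCProof

set_option linter.unusedSectionVars false

variable {V : Type*} [Fintype V] [DecidableEq V]

/-- The linear space containing the parameter space. -/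
def InL (G : MixedGraph V) (θ : Matrix V V ℝ × Matrix V V ℝ) : Prop :=
  (∀ v w, (v, w) ∉ G.D → θ.1 v w = 0) ∧ θ.2ᵀ = θ.2 ∧
    ∀ v w, v ≠ w → (v, w) ∉ G.B → θ.2 v w = 0

lemma exists_special (G : MixedGraph V) (v : V) (Y : Finset V) (h : G.SatisfiesHTC v Y) :
    ∃ p : Y → V, Function.Injective p ∧ (∀ w, w ∈ G.pa v ↔ ∃ i, p i = w) ∧
      ∃ θ, InL G θ ∧ IsUnit (1 - θ.1).det ∧ ∀ H : Y → Prop,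
        (Matrix.of fun (i j : Y) => if H i then (θ.2 * (1 - θ.1)⁻¹) i (p j)
          else (phi θ.1 θ.2) i (p j)).det ≠ 0 := by
  obtain ⟨R, hR, dep, hdep⟩ := exists_dep G Y (G.pa v) (exists_sys G v Y h)
  choose T hT hTB using hR.head
  have hne : ∀ i, R i ≠ [] := fun i hi => by have := hT i; simp [hi] at this
  let p : Y → V := fun i => (R i).getLast (hne i)
  have hpl : ∀ i, (R i).getLast? = some (p i) := fun i => List.getLast?_eq_some_getLast (hne i)
  have hpm : ∀ i, p i ∈ R i := fun i => List.getLast_mem (hne i)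
  have hTm : ∀ i, T i ∈ R i := fun i => List.mem_of_mem_head? (hT i)
  refine ⟨p, fun i j hij => hR.disj i j _ (hpm i) (hij ▸ hpm j), ?_, ?_⟩
  · intro w
    rw [hR.last w]
    simp only [hpl, Option.some.injEq]
  let lab : V → Y ⊕ V := fun u => if h : ∃ i, u ∈ R i then Sum.inl h.choose else Sum.inr u
  have hlab : ∀ u i, lab u = Sum.inl i ↔ u ∈ R i := by
    intro u i
    simp only [lab]
    split_ifs with h
    · rw [Sum.inl.injEq]
      constructor
      · rintro rfl; exact h.choose_spec
      · intro hi; exact hR.disj _ _ _ h.choose_spec hi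
    · simp only [reduceCtorEq, false_iff]
      exact fun hi => h ⟨i, hi⟩
  have hlabr : ∀ a u, lab a = Sum.inr u → a = u := by
    intro a u
    simp only [lab]
    split_ifs with h
    · simp
    · simp
  let pos : V → ℕ := fun u => match lab u with
    | Sum.inl i => (R i).idxOf u
    | Sum.inr _ => 0
  have hpos : ∀ u i, u ∈ R i → pos u = (R i).idxOf u := by
    intro u i hi
    simp only [pos, (hlab u i).2 hi]
  have hinj : ∀ a b, lab a = lab b → pos a = pos b → a = b := by
    intro a b h1 h2
    rcases hl : lab b with i | u
    · have ha := (hlab a i).1 (h1.trans hl)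
      have hb := (hlab b i).1 hl
      rw [hpos a i ha, hpos b i hb] at h2
      exact (List.idxOf_inj ha).1 h2
    · rw [hlabr _ _ hl, hlabr _ _ (h1.trans hl)]
  have hgap : ∀ a b, lab a = lab b → pos a < pos b →
      ∃ c, lab c = lab a ∧ pos c = pos a + 1 := by
    intro a b h1 h2
    rcases hl : lab b with i | u
    · have ha := (hlab a i).1 (h1.trans hl)
      have hb := (hlab b i).1 hl
      rw [hpos a i ha, hpos b i hb] at h2
      have h3 := List.idxOf_lt_length_of_mem hb
      have h4 : (R i).idxOf a + 1 < (R i).length := by omega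
      have hm : (R i)[(R i).idxOf a + 1] ∈ R i := List.getElem_mem h4
      refine ⟨(R i)[(R i).idxOf a + 1], ?_, ?_⟩
      · rw [h1, hl]; exact (hlab _ i).2 hm
      · rw [hpos _ i hm, hpos a i ha, (hR.nodup i).idxOf_getElem]
    · have := hlabr _ _ hl
      have := hlabr _ _ (h1.trans hl)
      have : a = b := by simp_all
      subst this; omega
  have hT0 : ∀ i, pos (T i) = 0 := by
    intro i
    rw [hpos _ i (hTm i)]
    have := hT i
    rcases hl : R i with _ | ⟨c, l⟩
    · exact absurd hl (hne i)
    · rw [hl] at this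
      simp at this
      simp [this]
  have hmul := sL_mul lab pos hinj hgap
  have hinv : (1 - sL lab pos)⁻¹ = sN lab pos := Matrix.inv_eq_right_inv hmul
  let y : Y → V := fun i => (i : V)
  have hO : ∀ a b, sO y T a b = sO y T b a := by
    intro a b
    simp only [sO, Matrix.of_apply]
    congr 1
    apply propext
    constructor <;> rintro ⟨m, hm⟩ <;> exact ⟨m, by tauto⟩
  refine ⟨(sL lab pos, sO y T), ⟨?_, ?_, ?_⟩, ?_, ?_⟩
  · intro a b hab
    simp only [sL, Matrix.of_apply]
    rw [if_neg]
    rintro ⟨h1, h2⟩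
    apply hab
    rcases hl : lab b with i | u
    · have ha := (hlab a i).1 (h1.trans hl)
      have hb := (hlab b i).1 hl
      rw [hpos a i ha, hpos b i hb] at h2
      have h3 := List.idxOf_lt_length_of_mem hb
      have h4 : (R i).idxOf a + 1 < (R i).length := by omega
      have h5 := List.isChain_iff_getElem.1 (hR.chain i) _ h4
      have h6 : (R i)[(R i).idxOf a + 1] = b := by
        simp only [← h2, List.getElem_idxOf]
      rwa [List.getElem_idxOf, h6] at h5
    · have := hlabr _ _ hl
      have := hlabr _ _ (h1.trans hl)
      have : a = b := by simp_all
      subst this; omega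
  · ext a b; exact hO b a
  · intro a b hab hB
    simp only [sO, Matrix.of_apply]
    rw [if_neg]
    rintro ⟨m, ⟨rfl, rfl⟩ | ⟨rfl, rfl⟩⟩
    · rcases hTB m with h1 | h1
      · exact hab h1.symm
      · exact hB h1
    · rcases hTB m with h1 | h1
      · exact hab h1
      · exact hB (G.B_symm _ _ h1)
  · exact (Matrix.isUnit_iff_isUnit_det _).1
      (IsUnit.of_mul_eq_one _ hmul)
  · intro H
    have := special_det lab pos y T p Subtype.val_injective hinj
      (fun i => (hlab _ _).2 (hTm i)) hT0 (fun i => (hlab _ _).2 (hpm i)) hlabr dep ?_ H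
    · simpa only [phi, hinv] using this
    · intro i l hl
      rcases hdep i l ((hlab _ _).1 hl) with ⟨h1, h2⟩ | h1
      · left
        refine ⟨h1, ?_⟩
        have := hT i
        rw [h2] at this
        exact Option.some.inj this
      · exact Or.inr h1

end HTCProof
end MixedGraph
namespace MixedGraph
section HTCProof

set_option linter.unusedSectionVars false

variable {V : Type*} [Fintype V] [DecidableEq V]

/-- A polynomial that does not vanish identically on the linear span of the parameters. -/
def Good (G : MixedGraph V) (P : MvPolynomial ((V × V) ⊕ (V × V)) ℝ) : Prop :=
  ∃ θ, InL G θ ∧ evalParam θ P ≠ 0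

lemma evalParam_mul (θ : Matrix V V ℝ × Matrix V V ℝ)
    (P Q : MvPolynomial ((V × V) ⊕ (V × V)) ℝ) :
    evalParam θ (P * Q) = evalParam θ P * evalParam θ Q := by
  simp [evalParam]

lemma evalParam_line (θ δ : Matrix V V ℝ × Matrix V V ℝ)
    (P : MvPolynomial ((V × V) ⊕ (V × V)) ℝ) :
    ∃ f : Polynomial ℝ, ∀ t, f.eval t = evalParam (θ + t • δ) P := by
  refine ⟨MvPolynomial.aeval (fun i => Polynomial.C
    (Sum.elim (fun e : V × V => θ.1 e.1 e.2) (fun e : V × V => θ.2 e.1 e.2) i) + Polynomial.X *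
    Polynomial.C
    (Sum.elim (fun e : V × V => δ.1 e.1 e.2) (fun e : V × V => δ.2 e.1 e.2) i)) P, ?_⟩
  intro t
  unfold evalParam
  induction P using MvPolynomial.induction_on with
  | C a => simp
  | add p q hp hq => simp only [map_add, Polynomial.eval_add, hp, hq]
  | mul_X p i hp =>
    simp only [map_mul, Polynomial.eval_mul, hp, MvPolynomial.aeval_X, MvPolynomial.eval_X]
    rcases i with i | i <;> simp <;> exact Or.inl (mul_comm _ _)

lemma InL.line {G : MixedGraph V} {θ δ : Matrix V V ℝ × Matrix V V ℝ} (h : InL G θ)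
    (h' : InL G δ) (t : ℝ) : InL G (θ + t • δ) := by
  refine ⟨?_, ?_, ?_⟩
  · intro v w hvw; simp [h.1 v w hvw, h'.1 v w hvw]
  · simp [h.2.1, h'.2.1]
  · intro v w h1 h2; simp [h.2.2 v w h1 h2, h'.2.2 v w h1 h2]

lemma Good.mul {G : MixedGraph V} {P Q : MvPolynomial ((V × V) ⊕ (V × V)) ℝ}
    (hP : Good G P) (hQ : Good G Q) : Good G (P * Q) := by
  obtain ⟨θ, hθ, h1⟩ := hP
  obtain ⟨η, hη, h2⟩ := hQ
  obtain ⟨f, hf⟩ := evalParam_line θ (η + (-1 : ℝ) • θ) P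
  obtain ⟨g, hg⟩ := evalParam_line θ (η + (-1 : ℝ) • θ) Q
  have hf0 : f ≠ 0 := by
    rintro rfl
    apply h1
    have := hf 0
    simpa using this.symm
  have hg0 : g ≠ 0 := by
    rintro rfl
    apply h2
    have := hg 1
    simpa using this.symm
  have hfg : f * g ≠ 0 := mul_ne_zero hf0 hg0
  have : ∃ t, (f * g).eval t ≠ 0 := by
    by_contra hcon
    push Not at hcon
    exact hfg (Polynomial.funext fun t => by simpa using hcon t)
  obtain ⟨t, ht⟩ := this
  refine ⟨θ + t • (η + (-1 : ℝ) • θ), hθ.line (hη.line hθ _) t, ?_⟩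
  rwa [evalParam_mul, ← hf, ← hg, ← Polynomial.eval_mul]

lemma good_one (G : MixedGraph V) : Good G 1 :=
  ⟨0, ⟨by simp, by simp, by simp⟩, by simp [evalParam]⟩

lemma good_prod {G : MixedGraph V} {κ : Type*} (s : Finset κ)
    (P : κ → MvPolynomial ((V × V) ⊕ (V × V)) ℝ) (h : ∀ k ∈ s, Good G (P k)) :
    Good G (∏ k ∈ s, P k) :=
  Finset.prod_induction P (Good G) (fun _ _ => Good.mul) (good_one G) h

/-- Generic matrix of directed coefficients. -/
noncomputable def XL : Matrix V V (MvPolynomial ((V × V) ⊕ (V × V)) ℝ) :=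
  Matrix.of fun a b => MvPolynomial.X (Sum.inl (a, b))

/-- Generic matrix of error covariances. -/
noncomputable def XO : Matrix V V (MvPolynomial ((V × V) ⊕ (V × V)) ℝ) :=
  Matrix.of fun a b => MvPolynomial.X (Sum.inr (a, b))

/-- Evaluation as a ring homomorphism. -/
noncomputable def evH (θ : Matrix V V ℝ × Matrix V V ℝ) :
    MvPolynomial ((V × V) ⊕ (V × V)) ℝ →+* ℝ :=
  MvPolynomial.eval (Sum.elim (fun e => θ.1 e.1 e.2) (fun e => θ.2 e.1 e.2))

lemma evH_eq (θ : Matrix V V ℝ × Matrix V V ℝ) (P) : evalParam θ P = evH θ P := rfl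

lemma evH_XL (θ : Matrix V V ℝ × Matrix V V ℝ) : (evH θ).mapMatrix (1 - XL) = 1 - θ.1 := by
  rw [map_sub, map_one]
  congr 1
  ext a b; simp [XL, evH]

lemma evH_XO (θ : Matrix V V ℝ × Matrix V V ℝ) : (evH θ).mapMatrix XO = θ.2 := by
  ext a b; simp [XO, evH]

lemma evH_det (θ : Matrix V V ℝ × Matrix V V ℝ) :
    evalParam θ (1 - XL : Matrix V V _).det = (1 - θ.1).det := by
  rw [evH_eq, RingHom.map_det, evH_XL]

lemma posDef_add (Ω : Matrix V V ℝ) (hΩ : Ωᵀ = Ω) (t : ℝ) (ht : ∑ i, ∑ j, |Ω i j| < t) :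
    (Ω + t • (1 : Matrix V V ℝ)).PosDef := by
  apply Matrix.PosDef.of_dotProduct_mulVec_pos
  · rw [Matrix.IsHermitian, Matrix.conjTranspose_eq_transpose_of_trivial]
    simp [hΩ]
  · intro x hx
    have hx2 : 0 < ∑ i, x i ^ 2 := by
      apply lt_of_le_of_ne (Finset.sum_nonneg fun i _ => sq_nonneg _)
      intro h0
      apply hx
      funext i
      have := (Finset.sum_eq_zero_iff_of_nonneg (fun i _ => sq_nonneg (x i))).1 h0.symm i
        (Finset.mem_univ i)
      simpa using this
    have hsq : ∀ i, x i ^ 2 ≤ ∑ i, x i ^ 2 := fun i =>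
      Finset.single_le_sum (f := fun i => x i ^ 2) (fun i _ => sq_nonneg (x i))
        (Finset.mem_univ i)
    have e1 : star x ⬝ᵥ (Ω + t • (1 : Matrix V V ℝ)) *ᵥ x
        = ∑ i, ∑ j, x i * Ω i j * x j + t * ∑ i, x i ^ 2 := by
      rw [Matrix.add_mulVec, dotProduct_add, Matrix.smul_mulVec, Matrix.one_mulVec,
        dotProduct_smul]
      congr 1
      · simp only [dotProduct, Matrix.mulVec, Finset.mul_sum]
        exact Finset.sum_congr rfl fun i _ => Finset.sum_congr rfl fun j _ => by simp; ring
      · simp only [dotProduct, smul_eq_mul]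
        congr 1
        exact Finset.sum_congr rfl fun i _ => by simp; ring
    rw [e1]
    have e2 : -((∑ i, ∑ j, |Ω i j|) * ∑ i, x i ^ 2) ≤ ∑ i, ∑ j, x i * Ω i j * x j := by
      rw [Finset.sum_mul, ← Finset.sum_neg_distrib]
      refine Finset.sum_le_sum fun i _ => ?_
      rw [Finset.sum_mul, ← Finset.sum_neg_distrib]
      refine Finset.sum_le_sum fun j _ => ?_
      have h1 : |x i * Ω i j * x j| ≤ |Ω i j| * ∑ i, x i ^ 2 := by
        have : |x i * Ω i j * x j| = |Ω i j| * (|x i| * |x j|) := by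
          rw [abs_mul, abs_mul]; ring
        rw [this]
        apply mul_le_mul_of_nonneg_left _ (abs_nonneg _)
        have := hsq i
        have := hsq j
        rw [← sq_abs] at *
        nlinarith [sq_nonneg (|x i| - |x j|), hsq i, hsq j, sq_abs (x i), sq_abs (x j)]
      linarith [neg_abs_le (x i * Ω i j * x j)]
    nlinarith

lemma Good.theta {G : MixedGraph V} {P : MvPolynomial ((V × V) ⊕ (V × V)) ℝ}
    (hP : Good G P) : ∃ θ ∈ G.Theta, evalParam θ P ≠ 0 := by
  have hdet : Good G (1 - XL : Matrix V V _).det :=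
    ⟨0, ⟨by simp, by simp, by simp⟩, by rw [evH_det]; simp⟩
  obtain ⟨θ, hθ, h⟩ := hP.mul hdet
  have hδ : InL G ((0, 1) : Matrix V V ℝ × Matrix V V ℝ) := by
    refine ⟨by simp, by simp, fun v w hvw _ => ?_⟩
    simp [hvw]
  obtain ⟨f, hf⟩ := evalParam_line θ (0, 1) (P * (1 - XL : Matrix V V _).det)
  have hf0 : f ≠ 0 := by
    rintro rfl
    apply h
    have := hf 0
    simpa using this.symm
  have : ∃ t, ∑ i, ∑ j, |θ.2 i j| < t ∧ f.eval t ≠ 0 := by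
    by_contra hcon
    push Not at hcon
    apply hf0
    apply Polynomial.eq_zero_of_infinite_isRoot
    exact (Set.Ioi_infinite (∑ i, ∑ j, |θ.2 i j|)).mono fun t ht => hcon t ht
  obtain ⟨t, ht, h2⟩ := this
  rw [hf, evalParam_mul, evH_det] at h2
  have hl := hθ.line hδ t
  refine ⟨_, ⟨⟨hl.1, (right_ne_zero_of_mul h2).isUnit⟩, ?_, hl.2.2⟩, left_ne_zero_of_mul h2⟩
  exact posDef_add θ.2 hθ.2.1 t ht

lemma inv_scaled (θ : Matrix V V ℝ × Matrix V V ℝ) (h : IsUnit (1 - θ.1).det) :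
    (1 - θ.1).adjugate = (1 - θ.1).det • (1 - θ.1)⁻¹ := by
  rw [Matrix.inv_def, smul_smul, Ring.mul_inverse_cancel _ h, one_smul]

lemma exists_det_poly {ι : Type*} [Fintype ι] [DecidableEq ι] (y p : ι → V) (H : ι → Prop) :
    ∃ P, ∀ θ : Matrix V V ℝ × Matrix V V ℝ, IsUnit (1 - θ.1).det → ∃ c : ℝ, c ≠ 0 ∧
      evalParam θ P = c * (Matrix.of fun i j => if H i then (θ.2 * (1 - θ.1)⁻¹) (y i) (p j)
          else (phi θ.1 θ.2) (y i) (p j)).det := by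
  let adj : Matrix V V (MvPolynomial ((V × V) ⊕ (V × V)) ℝ) := (1 - XL).adjugate
  let M1 : Matrix V V (MvPolynomial ((V × V) ⊕ (V × V)) ℝ) := XO * adj
  let M2 : Matrix V V (MvPolynomial ((V × V) ⊕ (V × V)) ℝ) := adjᵀ * XO * adj
  refine ⟨(Matrix.of fun i j => if H i then M1 (y i) (p j)
    else M2 (y i) (p j)).det, ?_⟩
  intro θ hθ
  let d := (1 - θ.1).det
  refine ⟨∏ i, (if H i then d else d * d), ?_, ?_⟩
  · apply Finset.prod_ne_zero_iff.2
    intro i _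
    split_ifs
    · exact hθ.ne_zero
    · exact mul_ne_zero hθ.ne_zero hθ.ne_zero
  · rw [← Matrix.det_mul_column, evH_eq, RingHom.map_det]
    congr 1
    have ea : (evH θ).mapMatrix adj = d • (1 - θ.1)⁻¹ := by
      rw [RingHom.map_adjugate, evH_XL, inv_scaled θ hθ]
    have e1 : (evH θ).mapMatrix (XO * adj) = d • (θ.2 * (1 - θ.1)⁻¹) := by
      rw [map_mul, evH_XO, ea, Matrix.mul_smul]
    have eat : (evH θ).mapMatrix adjᵀ = d • ((1 - θ.1)⁻¹)ᵀ := by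
      rw [← Matrix.transpose_smul, ← ea]; rfl
    have e2 : (evH θ).mapMatrix (adjᵀ * XO * adj) = (d * d) • phi θ.1 θ.2 := by
      rw [map_mul, map_mul, evH_XO, ea, eat, phi]
      simp only [Matrix.mul_smul, Matrix.smul_mul, smul_smul]
    ext i j
    simp only [RingHom.mapMatrix_apply, Matrix.map_apply, Matrix.of_apply]
    split_ifs
    · exact congrFun (congrFun e1 (y i)) (p j)
    · exact congrFun (congrFun e2 (y i)) (p j)

end HTCProof
end MixedGraph
namespace MixedGraph
section HTCProof

set_option linter.unusedSectionVars false

variable {V : Type*} [Fintype V] [DecidableEq V]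

/-- `F` is generically a rational function of the covariance matrix. -/
def RI (G : MixedGraph V) (F : Matrix V V ℝ × Matrix V V ℝ → ℝ) : Prop :=
  ∃ P, Good G P ∧ ∃ p q : MvPolynomial (V × V) ℝ, ∀ θ ∈ G.Theta, evalParam θ P ≠ 0 →
    evalAtCov (phi θ.1 θ.2) q ≠ 0 ∧
      F θ * evalAtCov (phi θ.1 θ.2) q = evalAtCov (phi θ.1 θ.2) p

lemma cov_mul (S : Matrix V V ℝ) (p q : MvPolynomial (V × V) ℝ) :
    evalAtCov S (p * q) = evalAtCov S p * evalAtCov S q := by simp [evalAtCov]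

lemma cov_add (S : Matrix V V ℝ) (p q : MvPolynomial (V × V) ℝ) :
    evalAtCov S (p + q) = evalAtCov S p + evalAtCov S q := by simp [evalAtCov]

lemma RI.congr {G : MixedGraph V} {F F' : Matrix V V ℝ × Matrix V V ℝ → ℝ} (h : RI G F)
    (he : ∀ θ ∈ G.Theta, F' θ = F θ) : RI G F' := by
  obtain ⟨P, hP, p, q, hpq⟩ := h
  exact ⟨P, hP, p, q, fun θ hθ h0 => by rw [he θ hθ]; exact hpq θ hθ h0⟩

lemma RI.const (G : MixedGraph V) (c : ℝ) : RI G fun _ => c :=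
  ⟨1, good_one G, MvPolynomial.C c, 1, fun θ _ _ => by simp [evalAtCov]⟩

lemma RI.cov (G : MixedGraph V) (a b : V) : RI G fun θ => phi θ.1 θ.2 a b :=
  ⟨1, good_one G, MvPolynomial.X (a, b), 1, fun θ _ _ => by simp [evalAtCov]⟩

lemma RI.mul {G : MixedGraph V} {F F' : Matrix V V ℝ × Matrix V V ℝ → ℝ} (h : RI G F)
    (h' : RI G F') : RI G fun θ => F θ * F' θ := by
  obtain ⟨P, hP, p, q, hpq⟩ := h
  obtain ⟨P', hP', p', q', hpq'⟩ := h'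
  refine ⟨P * P', hP.mul hP', p * p', q * q', fun θ hθ h0 => ?_⟩
  rw [evalParam_mul] at h0
  obtain ⟨a1, a2⟩ := hpq θ hθ (left_ne_zero_of_mul h0)
  obtain ⟨b1, b2⟩ := hpq' θ hθ (right_ne_zero_of_mul h0)
  rw [cov_mul, cov_mul, ← a2, ← b2]
  exact ⟨mul_ne_zero a1 b1, by ring⟩

lemma RI.add {G : MixedGraph V} {F F' : Matrix V V ℝ × Matrix V V ℝ → ℝ} (h : RI G F)
    (h' : RI G F') : RI G fun θ => F θ + F' θ := by
  obtain ⟨P, hP, p, q, hpq⟩ := h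
  obtain ⟨P', hP', p', q', hpq'⟩ := h'
  refine ⟨P * P', hP.mul hP', p * q' + p' * q, q * q', fun θ hθ h0 => ?_⟩
  rw [evalParam_mul] at h0
  obtain ⟨a1, a2⟩ := hpq θ hθ (left_ne_zero_of_mul h0)
  obtain ⟨b1, b2⟩ := hpq' θ hθ (right_ne_zero_of_mul h0)
  rw [cov_mul, cov_add, cov_mul, cov_mul, ← a2, ← b2]
  exact ⟨mul_ne_zero a1 b1, by ring⟩

lemma RI.sub {G : MixedGraph V} {F F' : Matrix V V ℝ × Matrix V V ℝ → ℝ} (h : RI G F)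
    (h' : RI G F') : RI G fun θ => F θ - F' θ :=
  (h.add ((RI.const G (-1)).mul h')).congr fun θ _ => by ring

lemma RI.sum {G : MixedGraph V} {κ : Type*} (s : Finset κ)
    {F : κ → Matrix V V ℝ × Matrix V V ℝ → ℝ} (h : ∀ k ∈ s, RI G (F k)) :
    RI G fun θ => ∑ k ∈ s, F k θ := by
  have := Finset.sum_induction F (RI G) (fun _ _ h1 h2 => h1.add h2) (RI.const G 0) h
  exact this.congr fun θ _ => by rw [Finset.sum_apply]

lemma RI.prod {G : MixedGraph V} {κ : Type*} (s : Finset κ)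
    {F : κ → Matrix V V ℝ × Matrix V V ℝ → ℝ} (h : ∀ k ∈ s, RI G (F k)) :
    RI G fun θ => ∏ k ∈ s, F k θ := by
  have := Finset.prod_induction F (RI G) (fun _ _ h1 h2 => h1.mul h2) (RI.const G 1) h
  exact this.congr fun θ _ => by rw [Finset.prod_apply]

lemma RI.det {G : MixedGraph V} {ι : Type*} [Fintype ι] [DecidableEq ι]
    {A : Matrix V V ℝ × Matrix V V ℝ → Matrix ι ι ℝ} (h : ∀ i j, RI G fun θ => A θ i j) :
    RI G fun θ => (A θ).det := by
  refine RI.congr (F := fun θ => ∑ σ : Equiv.Perm ι,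
    ((Equiv.Perm.sign σ : ℤ) : ℝ) * ∏ i, A θ (σ i) i) ?_ fun θ _ => ?_
  · exact RI.sum _ fun σ _ => (RI.const G _).mul (RI.prod _ fun i _ => h _ _)
  · rw [Matrix.det_apply']

/-- Quotients by generically non-vanishing functions. -/
lemma RI.div {G : MixedGraph V} {F F' : Matrix V V ℝ × Matrix V V ℝ → ℝ} (h : RI G F)
    (h' : RI G F') (hne : ∃ P, Good G P ∧ ∀ θ ∈ G.Theta, evalParam θ P ≠ 0 → F' θ ≠ 0) :
    RI G fun θ => F θ / F' θ := by
  obtain ⟨P, hP, p, q, hpq⟩ := h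
  obtain ⟨P', hP', p', q', hpq'⟩ := h'
  obtain ⟨Q, hQ, hQF⟩ := hne
  refine ⟨P * P' * Q, (hP.mul hP').mul hQ, p * q', q * p', fun θ hθ h0 => ?_⟩
  rw [evalParam_mul, evalParam_mul] at h0
  obtain ⟨a1, a2⟩ := hpq θ hθ (left_ne_zero_of_mul (left_ne_zero_of_mul h0))
  obtain ⟨b1, b2⟩ := hpq' θ hθ (right_ne_zero_of_mul (left_ne_zero_of_mul h0))
  have c := hQF θ hθ (right_ne_zero_of_mul h0)
  rw [cov_mul, cov_mul, ← a2, ← b2]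
  refine ⟨mul_ne_zero a1 (mul_ne_zero c b1), ?_⟩
  field_simp

lemma inv_support {G : MixedGraph V} {Λ : Matrix V V ℝ} (h : Λ ∈ G.RDreg) (a y : V)
    (hne : (1 - Λ)⁻¹ a y ≠ 0) : Relation.ReflTransGen (fun a b => (a, b) ∈ G.D) a y := by
  by_contra hcon
  apply hne
  have := ((Matrix.isUnit_iff_isUnit_det _).2 h.2).invertible
  let b : V → ℕ := fun z =>
    if Relation.ReflTransGen (fun a b => (a, b) ∈ G.D) z y then 0 else 1
  have hb : (1 - Λ).BlockTriangular b := by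
    intro i j hij
    have hj : Relation.ReflTransGen (fun a b => (a, b) ∈ G.D) j y := by
      by_contra hj
      simp only [b, if_neg hj] at hij
      split_ifs at hij <;> omega
    have hi : ¬ Relation.ReflTransGen (fun a b => (a, b) ∈ G.D) i y := by
      intro hi
      simp only [b, if_pos hi] at hij
      omega
    have hne : i ≠ j := fun e => hi (e ▸ hj)
    have hD : (i, j) ∉ G.D := fun e => hi (Relation.ReflTransGen.head e hj)
    rw [Matrix.sub_apply, Matrix.one_apply_ne hne, h.1 i j hD, sub_zero]
  apply Matrix.blockTriangular_inv_of_blockTriangular hb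
  simp only [b, if_neg hcon, if_pos Relation.ReflTransGen.refl]
  omega

lemma half_zero {G : MixedGraph V} {θ : Matrix V V ℝ × Matrix V V ℝ} (h : θ ∈ G.Theta)
    (v y : V) (h1 : y ≠ v) (h2 : y ∉ G.sib v) (h3 : y ∉ G.htr v) :
    (θ.2 * (1 - θ.1)⁻¹) v y = 0 := by
  rw [Matrix.mul_apply]
  apply Finset.sum_eq_zero
  intro a _
  by_contra hne
  have hO := left_ne_zero_of_mul hne
  have hN := inv_support h.1 a y (right_ne_zero_of_mul hne)
  obtain ⟨l, hl, hlast⟩ := List.exists_isChain_cons_of_relationReflTransGen hN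
  have hva : v = a ∨ (v, a) ∈ G.B := by
    by_contra hcon
    push Not at hcon
    exact hO (h.2.2 v a hcon.1 hcon.2)
  apply h3
  have hlne : l ≠ [] := by
    rintro rfl
    simp at hlast
    subst hlast
    rcases hva with e | e
    · exact h1 e.symm
    · apply h2
      simp only [sib, Finset.mem_filter, Finset.mem_univ, true_and]
      exact G.B_symm _ _ e
  have hlen : 1 ≤ l.length := List.length_pos_iff.2 hlne
  by_cases hva' : v = a
  · refine ⟨h1, h2, ⟨[v], a :: l, by simp, by simp, false, List.isChain_singleton v, hl, by simp [hva']⟩,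
      by simp [Trek.source], hlast, by simp [Trek.IsHalfTrek, Trek.leftSet], ?_⟩
    simpa [Trek.nEdges] using hlen
  · refine ⟨h1, h2, ⟨[v], a :: l, by simp, by simp, true, List.isChain_singleton v, hl, ?_⟩,
      by simp [Trek.source], hlast, by simp [Trek.IsHalfTrek, Trek.leftSet], ?_⟩
    · simpa using hva.resolve_left hva'
    · simpa [Trek.nEdges] using hlen

lemma half_eq {G : MixedGraph V} {θ : Matrix V V ℝ × Matrix V V ℝ} (h : θ ∈ G.Theta) :
    (1 - θ.1)ᵀ * phi θ.1 θ.2 = θ.2 * (1 - θ.1)⁻¹ := by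
  have h1 : (1 - θ.1)ᵀ * ((1 - θ.1)⁻¹)ᵀ = 1 := by
    rw [← Matrix.transpose_mul, Matrix.nonsing_inv_mul _ h.1.2, Matrix.transpose_one]
  rw [phi, ← Matrix.mul_assoc, ← Matrix.mul_assoc, h1, Matrix.one_mul]

lemma omega_eq {G : MixedGraph V} {θ : Matrix V V ℝ × Matrix V V ℝ} (h : θ ∈ G.Theta) :
    (1 - θ.1)ᵀ * phi θ.1 θ.2 * (1 - θ.1) = θ.2 := by
  rw [half_eq h, Matrix.mul_assoc, Matrix.nonsing_inv_mul _ h.1.2, Matrix.mul_one]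

lemma omega_symm {G : MixedGraph V} {θ : Matrix V V ℝ × Matrix V V ℝ} (h : θ ∈ G.Theta) :
    θ.2ᵀ = θ.2 := by
  have := h.2.1.isHermitian
  rwa [Matrix.IsHermitian, Matrix.conjTranspose_eq_transpose_of_trivial] at this

lemma full_eq {G : MixedGraph V} {θ : Matrix V V ℝ × Matrix V V ℝ} (h : θ ∈ G.Theta) :
    phi θ.1 θ.2 * (1 - θ.1) = (θ.2 * (1 - θ.1)⁻¹)ᵀ := by
  rw [phi, Matrix.mul_assoc, Matrix.nonsing_inv_mul _ h.1.2, Matrix.mul_one,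
    Matrix.transpose_mul, omega_symm h]

/-- Multiplication by a column of `1 - Λ` as a sum over the parents. -/
lemma mul_col {G : MixedGraph V} {Λ : Matrix V V ℝ} (h : ∀ v w, (v, w) ∉ G.D → Λ v w = 0)
    (M : Matrix V V ℝ) (v y : V) {Y : Finset V} (p : Y → V) (hp : Function.Injective p)
    (hpa : ∀ w, w ∈ G.pa v ↔ ∃ i, p i = w) :
    (M * (1 - Λ)) y v = M y v - ∑ j, M y (p j) * Λ (p j) v := by
  rw [Matrix.mul_sub, Matrix.mul_one, Matrix.sub_apply, Matrix.mul_apply]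
  congr 1
  have h1 : ∑ j, M y (p j) * Λ (p j) v = ∑ w ∈ G.pa v, M y w * Λ w v := by
    have : G.pa v = Finset.univ.image p := by
      ext w; rw [hpa]; simp
    rw [this, Finset.sum_image fun a _ b _ e => hp e]
  rw [h1]
  symm
  apply Finset.sum_subset (Finset.subset_univ _)
  intro w _ hw
  have : (w, v) ∉ G.D := by simpa [pa] using hw
  rw [h _ _ this, mul_zero]

lemma lambda_RI (G : MixedGraph V)
    (Y : V → Finset V) (hY : ∀ v, G.SatisfiesHTC v (Y v))
    (v : V) (hord : ∀ y ∈ Y v, y ∈ G.htr v → ∀ w, RI G fun θ => θ.1 w y) (w : V) :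
    RI G fun θ => θ.1 w v := by
  obtain ⟨p, hp, hpa, θ₀, hθ₀, hu, hdet⟩ := exists_special G v (Y v) (hY v)
  by_cases hw : w ∈ G.pa v
  swap
  · refine (RI.const G 0).congr fun θ hθ => hθ.1.1 _ _ ?_
    simpa [pa] using hw
  obtain ⟨j, rfl⟩ := (hpa w).1 hw
  let H : Y v → Prop := fun i => (i : V) ∈ G.htr v
  let M : Matrix V V ℝ × Matrix V V ℝ → Y v → V → ℝ := fun θ i a =>
    if H i then ((1 - θ.1)ᵀ * phi θ.1 θ.2 : Matrix V V ℝ) i a else phi θ.1 θ.2 i a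
  let A : Matrix V V ℝ × Matrix V V ℝ → Matrix (Y v) (Y v) ℝ := fun θ =>
    Matrix.of fun i k => M θ i (p k)
  have hM : ∀ i a, RI G fun θ => M θ i a := by
    intro i a
    by_cases hi : H i
    · refine RI.congr (F := fun θ => ∑ k, ((if k = (i : V) then 1 else 0) - θ.1 k i) *
        phi θ.1 θ.2 k a) ?_ fun θ _ => ?_
      · exact RI.sum _ fun k _ => ((RI.const G _).sub (hord i i.2 hi k)).mul (RI.cov G k a)
      · simp only [M, if_pos hi, Matrix.mul_apply, Matrix.transpose_apply, Matrix.sub_apply,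
          Matrix.one_apply]
    · refine (RI.cov G i a).congr fun θ _ => ?_
      simp only [M, if_neg hi]
  have hsys : ∀ θ ∈ G.Theta, (A θ) *ᵥ (fun k => θ.1 (p k) v) = fun i => M θ i v := by
    intro θ hθ
    funext i
    obtain ⟨hiv, his⟩ := (hY v).2.1 i i.2
    by_cases hi : H i
    · have e1 : ((1 - θ.1)ᵀ * phi θ.1 θ.2 * (1 - θ.1) : Matrix V V ℝ) i v = 0 := by
        rw [omega_eq hθ]
        apply hθ.2.2 _ _ hiv
        simpa [sib] using his
      rw [mul_col hθ.1.1 _ v i p hp hpa] at e1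
      simp only [A, M, Matrix.mulVec, dotProduct, Matrix.of_apply, if_pos hi]
      linarith
    · have e1 : (phi θ.1 θ.2 * (1 - θ.1)) i v = 0 := by
        rw [full_eq hθ, Matrix.transpose_apply]
        exact half_zero hθ v i hiv his hi
      rw [mul_col hθ.1.1 _ v i p hp hpa] at e1
      simp only [A, M, Matrix.mulVec, dotProduct, Matrix.of_apply, if_neg hi]
      linarith
  have hne : ∃ P, Good G P ∧ ∀ θ ∈ G.Theta, evalParam θ P ≠ 0 → (A θ).det ≠ 0 := by
    obtain ⟨P, hP⟩ := exists_det_poly (fun i : Y v => (i : V)) p H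
    refine ⟨P, ⟨θ₀, hθ₀, ?_⟩, ?_⟩
    · obtain ⟨c, hc, he⟩ := hP θ₀ hu
      rw [he]
      exact mul_ne_zero hc (hdet H)
    · intro θ hθ h0
      obtain ⟨c, hc, he⟩ := hP θ hθ.1.2
      rw [he] at h0
      have := right_ne_zero_of_mul h0
      simpa only [A, M, half_eq hθ] using this
  obtain ⟨P, hP, hPA⟩ := hne
  have key : RI G fun θ => ((A θ).updateCol j (fun i => M θ i v)).det / (A θ).det := by
    refine RI.div (RI.det fun i k => ?_) (RI.det fun i k => hM i (p k)) ⟨P, hP, hPA⟩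
    by_cases hk : k = j
    · subst hk
      refine (hM i v).congr fun θ _ => ?_
      simp
    · refine (hM i (p k)).congr fun θ _ => ?_
      simp [Matrix.updateCol_ne hk, A]
  obtain ⟨Q, hQ, a, b, hab⟩ := key
  refine ⟨Q * P, hQ.mul hP, a, b, fun θ hθ h0 => ?_⟩
  rw [evalParam_mul] at h0
  have hd := hPA θ hθ (right_ne_zero_of_mul h0)
  have h1 := hab θ hθ (left_ne_zero_of_mul h0)
  have h2 : ((A θ).updateCol j (fun i => M θ i v)).det / (A θ).det = θ.1 (p j) v := by
    rw [← hsys θ hθ, ← Matrix.cramer_apply, Matrix.cramer_eq_adjugate_mulVec,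
      Matrix.mulVec_mulVec, Matrix.adjugate_mul, Matrix.smul_mulVec, Matrix.one_mulVec]
    simp only [Pi.smul_apply, smul_eq_mul]
    field_simp
  beta_reduce at h1
  rw [h2] at h1
  exact h1

lemma omega_RI (G : MixedGraph V) (h : ∀ a b, RI G fun θ => θ.1 a b) (v w : V) :
    RI G fun θ => θ.2 v w := by
  refine RI.congr (F := fun θ => ∑ l, (∑ k, ((if k = v then 1 else 0) - θ.1 k v) *
        phi θ.1 θ.2 k l) * ((if l = w then 1 else 0) - θ.1 l w)) ?_ fun θ hθ => ?_
  · exact RI.sum _ fun l _ => (RI.sum _ fun k _ => ((RI.const G _).sub (h _ _)).mul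
      (RI.cov G k l)).mul ((RI.const G _).sub (h _ _))
  · conv_lhs => rw [← omega_eq hθ]
    simp only [Matrix.mul_apply, Matrix.transpose_apply, Matrix.sub_apply, Matrix.one_apply]

lemma rational_of_RI (G : MixedGraph V) (h : ∀ a b, RI G fun θ => θ.1 a b)
    (h' : ∀ a b, RI G fun θ => θ.2 a b) : G.RationallyIdentifiable := by
  have hall : ∀ i : (V × V) ⊕ (V × V), RI G fun θ =>
      Sum.elim (fun e : V × V => θ.1 e.1 e.2) (fun e : V × V => θ.2 e.1 e.2) i := by
    rintro (⟨a, b⟩ | ⟨a, b⟩)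
    · exact h a b
    · exact h' a b
  choose P hP p q hpq using hall
  have hG : Good G (∏ i, P i) := good_prod _ _ fun i _ => hP i
  refine ⟨_, ⟨∏ i, P i, hG.theta, rfl⟩, p, q, ?_⟩
  rintro θ ⟨hθ, hn⟩
  have h0 : ∀ i, evalParam θ (P i) ≠ 0 := by
    have : evalParam θ (∏ i, P i) ≠ 0 := fun e => hn ⟨hθ, e⟩
    rw [evH_eq, map_prod] at this
    exact fun i => Finset.prod_ne_zero_iff.1 this i (Finset.mem_univ i)
  exact ⟨fun i => (hpq i θ hθ (h0 i)).1, fun v w => (hpq (Sum.inl (v, w)) θ hθ (h0 _)).2,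
    fun v w => (hpq (Sum.inr (v, w)) θ hθ (h0 _)).2⟩

end HTCProof
end MixedGraph

theorem htc_identifiability {V : Type*} [Fintype V] [DecidableEq V] (G : MixedGraph V)
    (Y : V → Finset V) (hY : ∀ v, G.SatisfiesHTC v (Y v))
    (r : V → V → Prop) (hr : IsStrictTotalOrder V r)
    (hord : ∀ v w, w ∈ Y v → w ∈ G.htr v → r w v) :
    G.RationallyIdentifiable := by
  have hwf : WellFounded r := Finite.wellFounded_of_trans_of_irrefl r
  have h : ∀ v w, MixedGraph.RI G fun θ => θ.1 w v := by
    intro v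
    induction v using hwf.induction with
    | h v ih =>
      exact MixedGraph.lambda_RI G Y hY v fun y hy hyv => ih y (hord v y hy hyv)
  exact MixedGraph.rational_of_RI G (fun a b => h b a)
    (MixedGraph.omega_RI G fun a b => h b a)
end

section
/- Let G=(V,D,B) be a mixed graph in which every family (Y_v : v∈V) of subsets of V either contains a set Y_v that fails to satisfy the half-trek criterion with respect to v or contains a pair of sets (Y_v,Y_w) with v∈Y_w and w∈Y_v. Then the parametrization φ_G is generically infinite-to-one. -/
open scoped Classical Matrix

namespace MixedGraph

section LinAlg

variable {S : Type*} [CommRing S] [IsDomain S]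

lemma exists_perm_of_det_ne_zero {n : Type*} [Fintype n] [DecidableEq n]
    (M : Matrix n n S) (h : M.det ≠ 0) : ∃ σ : Equiv.Perm n, ∀ i, M (σ i) i ≠ 0 := by
  rw [Matrix.det_apply] at h
  obtain ⟨σ, -, hσ⟩ := Finset.exists_ne_zero_of_sum_ne_zero h
  refine ⟨σ, fun i hi => hσ ?_⟩
  have h0 : ∏ i, M (σ i) i = 0 := Finset.prod_eq_zero (Finset.mem_univ i) hi
  rw [h0, smul_zero]

lemma exists_rows_of_det_transpose_mul {n m : Type*} [Fintype n] [DecidableEq n] [Fintype m]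
    (J : Matrix m n S) (h : (Jᵀ * J).det ≠ 0) :
    ∃ ι : n → m, (J.submatrix ι id).det ≠ 0 := by
  have h1 : (Jᵀ * J) = fun i => ∑ s : m, J s i • J s := by
    funext i
    funext j
    simp [Matrix.mul_apply, Finset.sum_apply]
  have h2 : (Jᵀ * J).det = ∑ r : n → m, (∏ i, J (r i) i) * (J.submatrix r id).det := by
    have := (Matrix.detRowAlternating (n := n) (R := S)).toMultilinearMap.map_sum
      (α := fun _ => m) (fun i s => J s i • J s)
    rw [← h1] at this
    refine Eq.trans this (Finset.sum_congr rfl fun r _ => ?_)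
    rw [MultilinearMap.map_smul_univ]
    rfl
  rw [h2] at h
  obtain ⟨r, -, hr⟩ := Finset.exists_ne_zero_of_sum_ne_zero h
  exact ⟨r, right_ne_zero_of_mul hr⟩

lemma exists_choice_of_det {n m : Type*} [Fintype n] [DecidableEq n]
    (Z : Matrix m n S) (sw : m → m) (ι : n → m)
    (h : ((Matrix.of fun p e => Z p e + Z (sw p) e : Matrix m n S).submatrix ι id).det ≠ 0) :
    ∃ ι' : n → m, (∀ i, ι' i = ι i ∨ ι' i = sw (ι i)) ∧ (Z.submatrix ι' id).det ≠ 0 := by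
  have h2 := (Matrix.detRowAlternating (n := n) (R := S)).toMultilinearMap.map_add_univ
    (fun i => Z (ι i)) (fun i => Z (sw (ι i)))
  have h3 : (Matrix.detRowAlternating (n := n) (R := S)).toMultilinearMap
    ((fun i => Z (ι i)) + (fun i => Z (sw (ι i)))) ≠ 0 := h
  rw [h2] at h3
  obtain ⟨s, -, hs⟩ := Finset.exists_ne_zero_of_sum_ne_zero h3
  refine ⟨fun i => if i ∈ s then ι i else sw (ι i), fun i => by by_cases h : i ∈ s <;> simp [h], ?_⟩
  convert! hs using 1
  change Matrix.det _ = Matrix.det _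
  congr 1
  funext i j
  by_cases h : i ∈ s <;> simp [h, Finset.piecewise]

end LinAlg

variable {V : Type*} [Fintype V] [DecidableEq V]

section Treks

variable {S : Type*} [CommRing S] [IsDomain S]

/-- Walking along a permutation of `V ⊕ P` gives systems of walks. -/
lemma perm_walks {P : Type*} [Fintype P] (q : P → V) (σ : Equiv.Perm (V ⊕ P))
    (hσ : ∀ i, (σ (Sum.inr i)).isLeft) :
    ∃ (N : P → ℕ) (π : P → P), (∀ i, 2 ≤ N i) ∧ (∀ i, (σ ^ (N i)) (Sum.inr i) = Sum.inr (π i)) ∧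
      (∀ i k, 1 ≤ k → k < N i → ((σ ^ k) (Sum.inr i)).isLeft) ∧
      (∀ i j k l, 1 ≤ k → 1 ≤ l → k ≤ N i → l ≤ N j →
        (σ ^ k) (Sum.inr i) = (σ ^ l) (Sum.inr j) → i = j) := by
  classical
  have hex : ∀ i : P, ∃ n, 1 ≤ n ∧ ((σ ^ n) (Sum.inr i)).isRight := fun i =>
    ⟨orderOf σ, orderOf_pos σ, by simp [pow_orderOf_eq_one]⟩
  have hmin : ∀ i k, 1 ≤ k → k < Nat.find (hex i) → ((σ ^ k) (Sum.inr i)).isLeft := by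
    intro i k hk hlt
    have := Nat.find_min (hex i) hlt
    simpa [hk] using this
  have hπ : ∀ i, ∃ j, (σ ^ (Nat.find (hex i))) (Sum.inr i) = Sum.inr j := fun i =>
    Sum.isRight_iff.1 (Nat.find_spec (hex i)).2
  choose π hπ using hπ
  have key : ∀ i j k l, k ≤ l → 1 ≤ k → l ≤ Nat.find (hex j) →
        (σ ^ k) (Sum.inr i) = (σ ^ l) (Sum.inr j) → i = j := by
    intro i j k l hkl hk hl he
    obtain ⟨d, rfl⟩ := Nat.exists_eq_add_of_le hkl
    rw [pow_add, Equiv.Perm.mul_apply] at he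
    have he := (σ ^ k).injective he
    rcases Nat.eq_zero_or_pos d with rfl | hd
    · simpa using he
    · have := hmin j d hd (by omega)
      rw [← he] at this
      simp at this
  refine ⟨fun i => Nat.find (hex i), π, fun i => ?_, hπ, hmin, ?_⟩
  · have h1 := (Nat.find_spec (hex i)).1
    have h2 := (Nat.find_spec (hex i)).2
    by_contra hlt
    have h3 : Nat.find (hex i) = 1 := by
      change ¬ (2 ≤ Nat.find (hex i)) at hlt
      omega
    rw [h3, pow_one] at h2
    have := hσ i
    cases h : σ (Sum.inr i) <;> simp_all
  · intro i j k l hk hl hkN hlN he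
    rcases le_total k l with h | h
    · exact key i j k l h hk hlN he
    · exact (key j i l k h hl hkN he.symm).symm

lemma exists_treks (G : MixedGraph V) (L O : Matrix V V S)
    (hL : ∀ v w, (v, w) ∉ G.D → L v w = 0)
    (hO : ∀ v w, v ≠ w → (v, w) ∉ G.B → O v w = 0)
    (hdet : (1 - L).det ≠ 0) {P : Type*} [Fintype P] [DecidableEq P] (y q : P → V)
    (h : (Matrix.of fun i j => (O * (1 - L).adjugate) (y i) (q j)).det ≠ 0) :
    ∃ (f : P → G.Trek) (π : P → P), Function.Injective π ∧ (∀ i, (f i).left = [y i]) ∧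
      (∀ i, (f i).target = q (π i)) ∧
      ∀ i j, i ≠ j → Disjoint (f i).rightSet (f j).rightSet := by
  classical
  set Q := 1 - L with hQ
  let E : Matrix V P S := Matrix.of fun u p => if u = q p then 1 else 0
  let R : Matrix P V S := Matrix.of fun p u => O (y p) u
  have hN : R * Q.adjugate * E = Matrix.of fun i j => (O * Q.adjugate) (y i) (q j) := by
    ext i j
    simp [R, E, Matrix.mul_apply]
  have hbig : (Matrix.fromBlocks Q E R 0).det ≠ 0 := by
    intro h0
    have hmul : Matrix.fromBlocks Q E R 0 *
        Matrix.fromBlocks Q.adjugate (-(Q.adjugate * E)) 0 (Q.det • 1) =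
        Matrix.fromBlocks (Q.det • 1) 0 (R * Q.adjugate) (-(R * Q.adjugate * E)) := by
      rw [Matrix.fromBlocks_multiply]
      congr 1
      · simp [Matrix.mul_adjugate]
      · simp [← Matrix.mul_assoc, Matrix.mul_adjugate]
      · simp
      · simp [Matrix.mul_assoc]
    have := congrArg Matrix.det hmul
    rw [Matrix.det_mul, h0, zero_mul, Matrix.det_fromBlocks_zero₁₂, Matrix.det_neg, hN,
      Matrix.det_smul] at this
    have h2 := this.symm
    simp [hdet, h] at h2
  obtain ⟨σ, hσ⟩ := exists_perm_of_det_ne_zero (Matrix.fromBlocks Q E R 0)ᵀ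
    (by rwa [Matrix.det_transpose])
  have hσ' : ∀ i, Matrix.fromBlocks Q E R 0 i (σ i) ≠ 0 := hσ
  obtain ⟨N, π, hN2, hNπ, hNl, hNinj⟩ := perm_walks q σ (fun i => by
    have := hσ' (Sum.inr i)
    cases h : σ (Sum.inr i) with
    | inl a => rfl
    | inr a => rw [h] at this; simp at this)
  let val : V ⊕ P → V := Sum.elim id q
  let right : P → List V := fun i =>
    (List.range (N i - 1)).map fun k => val ((σ ^ (k + 1)) (Sum.inr i))
  have hlen : ∀ i, (right i).length = N i - 1 := fun i => by simp [right]
  have hne : ∀ i, right i ≠ [] := fun i => by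
    rw [← List.length_pos_iff, hlen]; have := hN2 i; omega
  have hval : ∀ i k, 1 ≤ k → k < N i → (σ ^ k) (Sum.inr i) = Sum.inl (val ((σ ^ k) (Sum.inr i))) := by
    intro i k hk hk'
    obtain ⟨u, hu⟩ := Sum.isLeft_iff.1 (hNl i k hk hk')
    rw [hu]; rfl
  have hsucc : ∀ i k, (σ ^ (k+1)) (Sum.inr i) = σ ((σ ^ k) (Sum.inr i)) := by
    intro i k
    rw [pow_succ', Equiv.Perm.mul_apply]
  have hchain : ∀ i, (right i).Chain' fun a b => (a, b) ∈ G.D := by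
    intro i
    refine List.isChain_iff_getElem.2 ?_
    intro k hk
    rw [hlen] at hk
    simp only [right, List.getElem_map, List.getElem_range]
    have h1 := hval i (k+1) (by omega) (by omega)
    have h2 := hval i (k+1+1) (by omega) (by omega)
    set a := val ((σ ^ (k+1)) (Sum.inr i))
    set b := val ((σ ^ (k+1+1)) (Sum.inr i))
    have h2' := h2
    rw [hsucc, h1] at h2'
    have h3 := hσ' (Sum.inl a)
    rw [h2'] at h3
    by_contra hD
    have hab : a = b := by
      by_contra hab
      apply h3
      simp [hQ, hL a b hD, hab]
    rw [← hab, ← h1, pow_succ, Equiv.Perm.mul_apply] at h2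
    have h6 := (σ ^ (k+1)).injective h2
    have h7 := hval i 1 le_rfl (by have := hN2 i; omega)
    rw [pow_one, h6] at h7
    simp at h7
  have hhead : ∀ i, (right i).head (hne i) = val (σ (Sum.inr i)) := by
    intro i
    simp only [right, List.head_map, List.head_range, zero_add, pow_one]
  have hlast : ∀ i, (right i).getLast (hne i) = q (π i) := by
    intro i
    have h2 := hN2 i
    rw [List.getLast_eq_getElem]
    simp only [right, List.getElem_map, List.getElem_range, List.length_map, List.length_range]
    have h1 := hval i (N i - 1 - 1 + 1) (by omega) (by omega)
    set a := val ((σ ^ (N i - 1 - 1 + 1)) (Sum.inr i))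
    have h3 := hσ' (Sum.inl a)
    rw [← h1, ← hsucc, show N i - 1 - 1 + 1 + 1 = N i by omega, hNπ, h1] at h3
    by_contra hne
    apply h3
    simp [E, hne]
  have hfirst : ∀ i, y i = val (σ (Sum.inr i)) ∨ (y i, val (σ (Sum.inr i))) ∈ G.B := by
    intro i
    have h1 := hval i 1 le_rfl (by have := hN2 i; omega)
    rw [pow_one] at h1
    have h3 := hσ' (Sum.inr i)
    rw [h1] at h3
    by_contra hcon
    push Not at hcon
    exact h3 (by simpa [R] using hO _ _ hcon.1 hcon.2)
  refine ⟨fun i =>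
    { left := [y i], right := right i, left_ne := by simp, right_ne := hne i,
      hasBidir := decide (y i ≠ val (σ (Sum.inr i))),
      left_chain := by simp [List.Chain'], right_chain := hchain i,
      head_cond := by
        rw [hhead]
        by_cases hy : y i = val (σ (Sum.inr i))
        · simp [hy]
        · simpa [hy] using (hfirst i).resolve_left hy }, π, ?_, fun i => rfl, ?_, ?_⟩
  · intro i j hij
    exact hNinj i j (N i) (N j) (by have := hN2 i; omega) (by have := hN2 j; omega) le_rfl le_rfl
      (by rw [hNπ, hNπ, hij])
  · intro i
    exact hlast i
  · intro i j hij
    rw [Finset.disjoint_left]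
    intro a ha hb
    simp only [Trek.rightSet, List.mem_toFinset, right, List.mem_map, List.mem_range] at ha hb
    obtain ⟨k, hk, rfl⟩ := ha
    obtain ⟨l, hl, hkl⟩ := hb
    apply hij
    refine hNinj i j (k+1) (l+1) (by omega) (by omega) (by omega) (by omega) ?_
    rw [hval i (k+1) (by omega) (by omega), hval j (l+1) (by omega) (by omega), hkl]

end Treks
end MixedGraph
namespace MixedGraph

variable {V : Type*} [Fintype V] [DecidableEq V]

/-- The ordered pairs of distinct nodes not joined by a bidirected edge. -/
abbrev NonAdj (G : MixedGraph V) : Type _ := {p : V × V // p.1 ≠ p.2 ∧ p ∉ G.B}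

/-- Swapping the components of a nonadjacent pair. -/
def NonAdj.sw {G : MixedGraph V} (p : G.NonAdj) : G.NonAdj :=
  ⟨(p.1.2, p.1.1), p.2.1.symm, fun h => p.2.2 (G.B_symm _ _ h)⟩

lemma NonAdj.sw_sw {G : MixedGraph V} (p : G.NonAdj) : p.sw.sw = p := rfl

section

variable {S : Type*} [CommRing S] [IsDomain S]

/-- Half of the Jacobian. -/
def Zmat (G : MixedGraph V) (M : Matrix V V S) : Matrix G.NonAdj G.D S :=
  Matrix.of fun p e => if p.1.2 = e.1.2 then M p.1.1 e.1.1 else 0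

/-- The Jacobian. -/
def Jmat (G : MixedGraph V) (M : Matrix V V S) : Matrix G.NonAdj G.D S :=
  Matrix.of fun p e => G.Zmat M p e + G.Zmat M p.sw e

lemma satisfiesHTC_of_det (G : MixedGraph V) (L O : Matrix V V S)
    (hL : ∀ v w, (v, w) ∉ G.D → L v w = 0)
    (hO : ∀ v w, v ≠ w → (v, w) ∉ G.B → O v w = 0)
    (hdet : (1 - L).det ≠ 0) (v : V) {P : Type*} [Fintype P] [DecidableEq P] (y q : P → V)
    (hy : Function.Injective y) (hq : Function.Injective q)
    (hyv : ∀ i, y i ≠ v ∧ y i ∉ G.sib v) (hqv : Finset.univ.image q = G.pa v)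
    (h : (Matrix.of fun i j => (O * (1 - L).adjugate) (y i) (q j)).det ≠ 0) :
    G.SatisfiesHTC v (Finset.univ.image y) := by
  classical
  obtain ⟨f0, π, hπ, hleft, htgt, hdisj⟩ := exists_treks G L O hL hO hdet y q h
  let triv : V → G.Trek := fun w =>
    { left := [w], right := [w], left_ne := by simp, right_ne := by simp, hasBidir := false,
      left_chain := by simp [List.Chain'], right_chain := by simp [List.Chain'],
      head_cond := by simp }
  have hf : ∀ i, Function.extend y f0 triv (y i) = f0 i := fun i => hy.extend_apply _ _ i
  refine ⟨?_, ?_, Function.extend y f0 triv, ?_, ⟨?_, ?_, ?_⟩, ?_⟩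
  · rw [← hqv, Finset.card_image_of_injective _ hy, Finset.card_image_of_injective _ hq]
  · intro w hw
    obtain ⟨i, -, rfl⟩ := Finset.mem_image.1 hw
    exact hyv i
  · intro w hw
    obtain ⟨i, -, rfl⟩ := Finset.mem_image.1 hw
    rw [hf, Trek.IsHalfTrek, Trek.leftSet, hleft]
    simp
  · intro w hw
    obtain ⟨i, -, rfl⟩ := Finset.mem_image.1 hw
    rw [hf, Trek.source]
    simp [hleft]
  · rw [← hqv]
    have hsurj : Function.Surjective π := Finite.surjective_of_injective hπ
    ext w
    simp only [Finset.mem_image, Finset.mem_univ, true_and, exists_exists_eq_and, hf, htgt]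
    constructor
    · rintro ⟨i, rfl⟩
      exact ⟨_, rfl⟩
    · rintro ⟨i, rfl⟩
      obtain ⟨j, rfl⟩ := hsurj i
      exact ⟨j, rfl⟩
  · intro w hw w' hw' hne
    obtain ⟨i, -, rfl⟩ := Finset.mem_image.1 hw
    obtain ⟨j, -, rfl⟩ := Finset.mem_image.1 hw'
    rw [hf, hf, htgt, htgt]
    intro hc
    exact hne (congrArg y (hπ (hq hc)))
  · intro w hw w' hw' hne
    obtain ⟨i, -, rfl⟩ := Finset.mem_image.1 hw
    obtain ⟨j, -, rfl⟩ := Finset.mem_image.1 hw'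
    rw [hf, hf]
    refine ⟨?_, hdisj i j fun hc => hne (congrArg y hc)⟩
    rw [Trek.leftSet, Trek.leftSet, hleft, hleft]
    simpa using hne

lemma det_jac_eq_zero (G : MixedGraph V)
    (h : ∀ Y : V → Finset V,
      (∃ v, ¬ G.SatisfiesHTC v (Y v)) ∨ ∃ v w, v ∈ Y w ∧ w ∈ Y v)
    (L O : Matrix V V S)
    (hL : ∀ v w, (v, w) ∉ G.D → L v w = 0)
    (hO : ∀ v w, v ≠ w → (v, w) ∉ G.B → O v w = 0)
    (hdet : (1 - L).det ≠ 0) :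
    ((G.Jmat (O * (1 - L).adjugate))ᵀ * G.Jmat (O * (1 - L).adjugate)).det = 0 := by
  classical
  set M := O * (1 - L).adjugate with hM
  by_contra hne
  obtain ⟨ι0, hι0⟩ := exists_rows_of_det_transpose_mul _ hne
  obtain ⟨ι1, hι01, hι1⟩ := exists_choice_of_det (G.Zmat M) NonAdj.sw ι0 hι0
  obtain ⟨σ, hσ⟩ := exists_perm_of_det_ne_zero _ hι1
  have hJ : ∀ p, G.Jmat M (NonAdj.sw p) = G.Jmat M p := by
    intro p
    funext e
    simp [Jmat, NonAdj.sw_sw, add_comm]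
  have hJ01 : ∀ i, G.Jmat M (ι1 i) = G.Jmat M (ι0 i) := by
    intro i
    rcases hι01 i with h | h
    · rw [h]
    · rw [h, hJ]
  have hinj : ∀ i j, G.Jmat M (ι1 i) = G.Jmat M (ι1 j) → i = j := by
    intro i j hij
    by_contra hne'
    apply hι0
    refine Matrix.det_zero_of_row_eq hne' ?_
    rw [hJ01, hJ01] at hij
    exact hij
  let ι : G.D → G.NonAdj := fun e => ι1 (σ e)
  have hιsnd : ∀ e, (ι e).1.2 = e.1.2 := by
    intro e
    by_contra hc
    exact hσ e (by simpa [Zmat] using fun h => absurd h hc)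
  have hιinj : Function.Injective ι := fun e e' hee =>
    σ.injective (hinj _ _ (congrArg (G.Jmat M) hee))
  have hιsw : ∀ e e', ι e ≠ (ι e').sw := by
    intro e e' hee
    have h1 : e = e' := σ.injective (hinj _ _ ((congrArg (G.Jmat M) hee).trans (hJ _)))
    subst h1
    exact (ι e).2.1 (congrArg (fun p => p.1.1) hee)
  have hιdet : ((G.Zmat M).submatrix ι id).det ≠ 0 := by
    have := Matrix.det_permute σ ((G.Zmat M).submatrix ι1 id)
    rw [Matrix.submatrix_submatrix] at this
    change ((G.Zmat M).submatrix ι id).det = _ at this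
    rw [this]
    refine mul_ne_zero ?_ hι1
    rcases Int.units_eq_one_or (Equiv.Perm.sign σ) with h | h <;> simp [h]
  let Y : V → Finset V := fun v =>
    Finset.univ.image fun e : {e : G.D // e.1.2 = v} => (ι e.1).1.1
  rcases h Y with ⟨v, hv⟩ | ⟨v, w, hvw, hwv⟩
  · apply hv
    refine satisfiesHTC_of_det G L O hL hO hdet v (fun e : {e : G.D // e.1.2 = v} => (ι e.1).1.1)
      (fun e => e.1.1.1) ?_ ?_ ?_ ?_ ?_
    · intro e e' hee
      apply Subtype.ext
      apply hιinj
      apply Subtype.ext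
      refine Prod.ext hee ?_
      rw [hιsnd, hιsnd, e.2, e'.2]
    · intro e e' hee
      apply Subtype.ext
      apply Subtype.ext
      exact Prod.ext hee (e.2.trans e'.2.symm)
    · intro e
      have h1 := (ι e.1).2
      have h2 := (hιsnd e.1).trans e.2
      refine ⟨fun hc => h1.1 (hc.trans h2.symm), fun hc => h1.2 ?_⟩
      simp only [sib, Finset.mem_filter, Finset.mem_univ, true_and] at hc
      have h3 : (ι e.1).1 = ((ι e.1).1.1, v) := Prod.ext rfl h2
      rw [h3]
      exact hc
    · ext u
      simp only [pa, Finset.mem_image, Finset.mem_univ, true_and, Finset.mem_filter]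
      constructor
      · rintro ⟨⟨⟨⟨a, b⟩, he⟩, rfl⟩, rfl⟩
        exact he
      · intro hu
        exact ⟨⟨⟨(u, v), hu⟩, rfl⟩, rfl⟩
    · rw [Matrix.twoBlockTriangular_det _ (fun e : G.D => e.1.2 = v)] at hιdet
      · have h1 := left_ne_zero_of_mul hιdet
        convert! h1 using 2
        ext i j
        simp [Matrix.toSquareBlockProp, Zmat, hιsnd, i.2, j.2]
        rfl
      · intro i hi j hj
        have : (ι i).1.2 ≠ j.1.2 := by
          rw [hιsnd, hj]; exact hi
        simp [Zmat, this]
  · obtain ⟨e, -, he⟩ := Finset.mem_image.1 hvw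
    obtain ⟨e', -, he'⟩ := Finset.mem_image.1 hwv
    apply hιsw e.1 e'.1
    apply Subtype.ext
    refine Prod.ext ?_ ?_
    · change _ = (ι e'.1).1.2
      rw [hιsnd, e'.2, ← he]
    · change _ = (ι e'.1).1.1
      rw [hιsnd, e.2, ← he']

end
end MixedGraph
namespace MixedGraph

variable {V : Type*} [Fintype V] [DecidableEq V]

/-- Entrywise derivative of a matrix-valued curve. -/
def MHas (M : ℝ → Matrix V V ℝ) (M' : Matrix V V ℝ) (t : ℝ) : Prop :=
  ∀ i j, HasDerivAt (fun s => M s i j) (M' i j) t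

lemma MHas.mul {M N : ℝ → Matrix V V ℝ} {M' N' : Matrix V V ℝ} {t : ℝ}
    (hM : MHas M M' t) (hN : MHas N N' t) :
    MHas (fun s => M s * N s) (M' * N t + M t * N') t := by
  intro i j
  simp only [Matrix.mul_apply, Matrix.add_apply, ← Finset.sum_add_distrib]
  exact HasDerivAt.fun_sum fun k _ => (hM i k).mul (hN k j)

lemma MHas.transpose {M : ℝ → Matrix V V ℝ} {M' : Matrix V V ℝ} {t : ℝ}
    (hM : MHas M M' t) : MHas (fun s => (M s)ᵀ) M'ᵀ t := fun i j => hM j i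

lemma differentiableAt_det {M : ℝ → Matrix V V ℝ} {t : ℝ}
    (hM : ∀ i j, DifferentiableAt ℝ (fun s => M s i j) t) :
    DifferentiableAt ℝ (fun s => (M s).det) t := by
  simp only [Matrix.det_apply']
  refine DifferentiableAt.fun_sum fun σ _ => ?_
  exact (DifferentiableAt.fun_finsetProd fun i _ => hM (σ i) i).const_mul _

lemma differentiableAt_inv {M : ℝ → Matrix V V ℝ} {t : ℝ}
    (hM : ∀ i j, DifferentiableAt ℝ (fun s => M s i j) t) (hdet : (M t).det ≠ 0) (i j : V) :
    DifferentiableAt ℝ (fun s => (M s)⁻¹ i j) t := by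
  have h1 : (fun s => (M s)⁻¹ i j) = fun s => ((M s).det)⁻¹ * (M s).adjugate i j := by
    funext s
    rw [Matrix.inv_def, Ring.inverse_eq_inv']
    rfl
  rw [h1]
  refine (((differentiableAt_det hM).inv hdet)).mul ?_
  simp only [Matrix.adjugate_apply]
  refine differentiableAt_det fun a b => ?_
  by_cases ha : a = j
  · subst ha
    simp
  · simpa [Matrix.updateRow_apply, ha] using hM a b

lemma MHas.inv {M : ℝ → Matrix V V ℝ} {M' : Matrix V V ℝ} {t : ℝ}
    (hM : MHas M M' t) (hdet : (M t).det ≠ 0) :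
    MHas (fun s => (M s)⁻¹) (-((M t)⁻¹ * M' * (M t)⁻¹)) t := by
  have hd := differentiableAt_inv (fun i j => (hM i j).differentiableAt) hdet
  let P' : Matrix V V ℝ := Matrix.of fun i j => deriv (fun s => (M s)⁻¹ i j) t
  have hP : MHas (fun s => (M s)⁻¹) P' t := fun i j => (hd i j).hasDerivAt
  have hev : ∀ᶠ s in nhds t, (M s).det ≠ 0 :=
    (differentiableAt_det fun i j => (hM i j).differentiableAt).continuousAt.eventually_ne hdet
  have hprod := hP.mul hM
  have hzero : P' * M t + (M t)⁻¹ * M' = 0 := by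
    ext i j
    have h1 := hprod i j
    have h2 : HasDerivAt (fun s => ((M s)⁻¹ * M s) i j) 0 t := by
      refine (hasDerivAt_const t ((1 : Matrix V V ℝ) i j)).congr_of_eventuallyEq ?_
      filter_upwards [hev] with s hs
      rw [Matrix.nonsing_inv_mul _ (isUnit_iff_ne_zero.2 hs)]
    exact h1.unique h2
  have hu : IsUnit (M t).det := isUnit_iff_ne_zero.2 hdet
  have : P' = -((M t)⁻¹ * M' * (M t)⁻¹) := by
    have h1 : P' * M t * (M t)⁻¹ = P' := by
      rw [Matrix.mul_assoc, Matrix.mul_nonsing_inv _ hu, Matrix.mul_one]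
    rw [← h1, eq_neg_of_add_eq_zero_left hzero, Matrix.neg_mul]
  rw [← this]
  exact hP

lemma phi_hasDeriv {L O : ℝ → Matrix V V ℝ} {L' O' : Matrix V V ℝ} {t : ℝ}
    (hL : MHas L L' t) (hO : MHas O O' t) (hdet : (1 - L t).det ≠ 0)
    (hsymm : (O t)ᵀ = O t)
    (hO' : O' = -(O t * (1 - L t)⁻¹ * L' + (O t * (1 - L t)⁻¹ * L')ᵀ)) :
    MHas (fun s => phi (L s) (O s)) 0 t := by
  have hQ : MHas (fun s => 1 - L s) (-L') t := by
    intro i j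
    simpa using (hL i j).const_sub ((1 : Matrix V V ℝ) i j)
  have hP := hQ.inv hdet
  have h := (hP.transpose.mul hO).mul hP
  have h0 : ∀ A B : Matrix V V ℝ, A = B → MHas (fun s => phi (L s) (O s)) A t →
    MHas (fun s => phi (L s) (O s)) B t := by
    rintro A B rfl h; exact h
  refine h0 _ _ ?_ h
  subst hO'
  generalize (1 - L t)⁻¹ = P
  simp only [Matrix.transpose_mul, Matrix.transpose_neg, hsymm]
  noncomm_ring

end MixedGraph
namespace MixedGraph

variable {V : Type*} [Fintype V] [DecidableEq V]

/-- Unordered pairs carrying a free entry of `Ω`. -/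
abbrev BE (G : MixedGraph V) : Type _ :=
  {s : Sym2 V // ∃ v w, s = s(v, w) ∧ (v = w ∨ (v, w) ∈ G.B)}

/-- The free coordinates. -/
abbrev Par (G : MixedGraph V) : Type _ := G.D ⊕ G.BE

section mats
variable {R : Type*} [CommRing R]

/-- The matrix supported on `D` with given entries. -/
noncomputable def Dm (G : MixedGraph V) (a : G.D → R) : Matrix V V R :=
  Matrix.of fun v w => if h : (v, w) ∈ G.D then a ⟨(v, w), h⟩ else 0

/-- The symmetric matrix supported on `B` and the diagonal with given entries. -/
noncomputable def Om (G : MixedGraph V) (x : G.BE → R) : Matrix V V R :=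
  Matrix.of fun v w => if h : v = w ∨ (v, w) ∈ G.B then x ⟨s(v, w), v, w, rfl, h⟩ else 0

lemma Dm_zero (G : MixedGraph V) (a : G.D → R) (v w : V) (h : (v, w) ∉ G.D) : G.Dm a v w = 0 := by
  simp [Dm, h]

lemma Om_zero (G : MixedGraph V) (a : G.BE → R) (v w : V) (h : v ≠ w) (h' : (v, w) ∉ G.B) :
    G.Om a v w = 0 := by
  simp [Om, h, h']

lemma Om_transpose (G : MixedGraph V) (a : G.BE → R) : (G.Om a)ᵀ = G.Om a := by
  ext v w
  simp only [Om, Matrix.transpose_apply, Matrix.of_apply]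
  have hiff : (w = v ∨ (w, v) ∈ G.B) ↔ (v = w ∨ (v, w) ∈ G.B) :=
    or_congr eq_comm ⟨G.B_symm _ _, G.B_symm _ _⟩
  by_cases h : v = w ∨ (v, w) ∈ G.B
  · rw [dif_pos h, dif_pos (hiff.2 h)]
    congr 1
    exact Subtype.ext Sym2.eq_swap
  · rw [dif_neg h, dif_neg (fun h' => h (hiff.1 h'))]

lemma Dm_map {R' : Type*} [CommRing R'] (G : MixedGraph V) (a : G.D → R) (f : R →+* R') :
    (G.Dm a).map f = G.Dm fun e => f (a e) := by
  ext v w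
  by_cases h : (v, w) ∈ G.D <;> simp [Dm, h]

lemma Om_map {R' : Type*} [CommRing R'] (G : MixedGraph V) (a : G.BE → R) (f : R →+* R') :
    (G.Om a).map f = G.Om fun e => f (a e) := by
  ext v w
  by_cases h : v = w ∨ (v, w) ∈ G.B <;> simp [Om, h]

lemma Zmat_mulVec (G : MixedGraph V) (M : Matrix V V R) (a : G.D → R) (p : G.NonAdj) :
    (G.Zmat M).mulVec a p = (M * G.Dm a) p.1.1 p.1.2 := by
  classical
  have h1 : (G.Zmat M).mulVec a p =
      ∑ e : G.D, (fun e : V × V => if p.1.2 = e.2 then M p.1.1 e.1 * G.Dm a e.1 e.2 else 0) e := by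
    simp only [Matrix.mulVec, dotProduct]
    refine Finset.sum_congr rfl fun e _ => ?_
    simp [Zmat, Dm]
  rw [h1, Finset.sum_coe_sort G.D
    (fun e : V × V => if p.1.2 = e.2 then M p.1.1 e.1 * G.Dm a e.1 e.2 else 0),
    Finset.sum_subset (Finset.subset_univ G.D), Fintype.sum_prod_type, Matrix.mul_apply]
  · refine Finset.sum_congr rfl fun u _ => ?_
    simp
  · intro e _ he
    simp [Dm_zero G a e.1 e.2 he]

end mats

lemma eq_zero_of_sum_sq {σ n : Type*} [Fintype n] (f : n → MvPolynomial σ ℝ)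
    (h : ∑ i, f i * f i = 0) : f = 0 := by
  funext i
  refine MvPolynomial.funext fun x => ?_
  have := congrArg (MvPolynomial.eval x) h
  rw [map_sum, map_zero, Finset.sum_eq_zero_iff_of_nonneg
    (fun i _ => by rw [map_mul]; exact mul_self_nonneg _)] at this
  have := this i (Finset.mem_univ i)
  rw [map_mul, mul_self_eq_zero] at this
  simpa using this

/-- Generic `Λ`. -/
noncomputable def LX (G : MixedGraph V) : Matrix V V (MvPolynomial G.Par ℝ) :=
  G.Dm fun e => MvPolynomial.X (Sum.inl e)

/-- Generic `Ω`. -/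
noncomputable def OX (G : MixedGraph V) : Matrix V V (MvPolynomial G.Par ℝ) :=
  G.Om fun e => MvPolynomial.X (Sum.inr e)

lemma LX_map (G : MixedGraph V) (x : G.Par → ℝ) :
    G.LX.map (MvPolynomial.eval x) = G.Dm fun e => x (Sum.inl e) := by
  simp [LX, Dm_map]

lemma OX_map (G : MixedGraph V) (x : G.Par → ℝ) :
    G.OX.map (MvPolynomial.eval x) = G.Om fun e => x (Sum.inr e) := by
  simp [OX, Om_map]

lemma one_sub_LX_map (G : MixedGraph V) (x : G.Par → ℝ) :
    (1 - G.LX).map (MvPolynomial.eval x) = 1 - G.Dm fun e => x (Sum.inl e) := by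
  rw [← LX_map, Matrix.map_sub _ (by simp), Matrix.map_one _ (by simp) (by simp)]

lemma eval_det (G : MixedGraph V) (x : G.Par → ℝ) :
    MvPolynomial.eval x (1 - G.LX).det = (1 - G.Dm fun e => x (Sum.inl e)).det := by
  rw [RingHom.map_det, RingHom.mapMatrix_apply, one_sub_LX_map]

lemma det_LX_ne_zero (G : MixedGraph V) : (1 - G.LX).det ≠ 0 := by
  intro h
  have h1 := G.eval_det 0
  have h2 : (G.Dm fun e : G.D => (0 : G.Par → ℝ) (Sum.inl e)) = 0 := by
    ext v w
    simp [Dm]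
  rw [h2, h] at h1
  simp at h1

lemma exists_kernel (G : MixedGraph V)
    (h : ∀ Y : V → Finset V,
      (∃ v, ¬ G.SatisfiesHTC v (Y v)) ∨ ∃ v w, v ∈ Y w ∧ w ∈ Y v) :
    ∃ A : G.D → MvPolynomial G.Par ℝ, A ≠ 0 ∧ ∀ v w, v ≠ w → (v, w) ∉ G.B →
      (G.OX * (1 - G.LX).adjugate * G.Dm A) v w + (G.OX * (1 - G.LX).adjugate * G.Dm A) w v
        = 0 := by
  have hd := det_jac_eq_zero G h G.LX G.OX (Dm_zero G _) (Om_zero G _) G.det_LX_ne_zero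
  set M := G.OX * (1 - G.LX).adjugate with hM
  obtain ⟨A, hA, hJA⟩ := Matrix.exists_mulVec_eq_zero_iff.2 hd
  refine ⟨A, hA, ?_⟩
  have h1 : ∑ p, (G.Jmat M).mulVec A p * (G.Jmat M).mulVec A p = 0 := by
    change (G.Jmat M).mulVec A ⬝ᵥ (G.Jmat M).mulVec A = 0
    have h2 : A ⬝ᵥ (((G.Jmat M)ᵀ * G.Jmat M).mulVec A) = 0 := by rw [hJA, dotProduct_zero]
    rw [← Matrix.mulVec_mulVec, Matrix.dotProduct_mulVec, Matrix.vecMul_transpose] at h2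
    exact h2
  have h2 := eq_zero_of_sum_sq _ h1
  intro v w hvw hB
  have h3 := congrFun h2 ⟨(v, w), hvw, hB⟩
  have h4 : (G.Jmat M).mulVec A ⟨(v, w), hvw, hB⟩ =
      (G.Zmat M).mulVec A ⟨(v, w), hvw, hB⟩ +
      (G.Zmat M).mulVec A (NonAdj.sw ⟨(v, w), hvw, hB⟩) := by
    simp only [Matrix.mulVec, dotProduct, ← Finset.sum_add_distrib]
    refine Finset.sum_congr rfl fun e _ => ?_
    simp [Jmat, add_mul]
  rw [h4, Zmat_mulVec, Zmat_mulVec] at h3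
  exact h3

/-- The polynomial vector field. -/
noncomputable def field (G : MixedGraph V) (A : G.D → MvPolynomial G.Par ℝ) :
    G.Par → MvPolynomial G.Par ℝ :=
  Sum.elim (fun e => (1 - G.LX).det * A e)
    (fun s => - Sym2.lift ⟨fun v w => (G.OX * (1 - G.LX).adjugate * G.Dm A) v w +
      (G.OX * (1 - G.LX).adjugate * G.Dm A) w v, fun _ _ => add_comm _ _⟩ s.1)

lemma exists_posDef_nonvanishing (G : MixedGraph V) (p : MvPolynomial G.Par ℝ) (hp : p ≠ 0) :
    ∃ x : G.Par → ℝ, MvPolynomial.eval x p ≠ 0 ∧ (G.Om fun e => x (Sum.inr e)).PosDef := by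
  classical
  let s : G.Par → Set ℝ := Sum.elim (fun _ => Set.univ)
    (fun b => if b.1.IsDiag then Set.Ioi (Fintype.card V + 1 : ℝ) else Set.Ioo 0 1)
  have hs : ∀ i, (s i).Infinite := by
    rintro (i | b)
    · exact Set.infinite_univ
    · by_cases hb : b.1.IsDiag
      · simpa [s, hb] using Set.Ioi_infinite _
      · simpa [s, hb] using Set.Ioo_infinite one_pos
  have : ∃ x ∈ Set.pi Set.univ s, MvPolynomial.eval x p ≠ 0 := by
    by_contra hcon
    push Not at hcon
    exact hp (MvPolynomial.funext_set s hs fun x hx => by rw [hcon x hx, map_zero])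
  obtain ⟨x, hx, hxp⟩ := this
  refine ⟨x, hxp, ?_⟩
  refine Matrix.PosDef.of_dotProduct_mulVec_pos ?_ fun z hz => ?_
  · rw [Matrix.IsHermitian, Matrix.conjTranspose_eq_transpose_of_trivial, Om_transpose]
  · set O := G.Om fun e => x (Sum.inr e) with hO
    have hdiag : ∀ v, (Fintype.card V + 1 : ℝ) ≤ O v v := by
      intro v
      have := hx (Sum.inr ⟨s(v, v), v, v, rfl, Or.inl rfl⟩) trivial
      simp only [s, Sum.elim_inr, Sym2.isDiag_iff_proj_eq, if_true, Set.mem_Ioi] at this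
      simpa [hO, Om] using this.le
    have hoff : ∀ v w, v ≠ w → 0 ≤ O v w ∧ O v w ≤ 1 := by
      intro v w hvw
      by_cases hB : (v, w) ∈ G.B
      · have := hx (Sum.inr ⟨s(v, w), v, w, rfl, Or.inr hB⟩) trivial
        simp only [s, Sum.elim_inr, Sym2.isDiag_iff_proj_eq, if_neg hvw, Set.mem_Ioo] at this
        simp only [hO, Om, Matrix.of_apply]
        rw [dif_pos (Or.inr hB)]
        exact ⟨this.1.le, this.2.le⟩
      · rw [hO, Om_zero G _ v w hvw hB]; simp
    have hterm : ∀ v w, -(z v ^ 2 + z w ^ 2) / 2 +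
        (if v = w then (Fintype.card V + 1 : ℝ) * z v ^ 2 else 0) ≤ z v * (O v w * z w) := by
      intro v w
      by_cases hvw : v = w
      · subst hvw
        have := hdiag v
        simp only [if_true]
        nlinarith [sq_nonneg (z v), mul_le_mul_of_nonneg_right this (sq_nonneg (z v))]
      · obtain ⟨h0, h1⟩ := hoff v w hvw
        simp only [if_neg hvw]
        nlinarith [mul_nonneg h0 (sq_nonneg (z v + z w)),
          mul_nonneg (sub_nonneg.2 h1) (add_nonneg (sq_nonneg (z v)) (sq_nonneg (z w)))]
    have hsum : star z ⬝ᵥ (O *ᵥ z) = ∑ v, ∑ w, z v * (O v w * z w) := by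
      simp [dotProduct, Matrix.mulVec, Finset.mul_sum]
    have hle := Finset.sum_le_sum fun v (_ : v ∈ Finset.univ) =>
      Finset.sum_le_sum fun w (_ : w ∈ Finset.univ) => hterm v w
    rw [hsum]
    refine lt_of_lt_of_le ?_ hle
    have hcalc : ∑ v, ∑ w, (-(z v ^ 2 + z w ^ 2) / 2 +
        (if v = w then (Fintype.card V + 1 : ℝ) * z v ^ 2 else 0)) = ∑ v, z v ^ 2 := by
      simp only [Finset.sum_add_distrib, Finset.sum_ite_eq, Finset.mem_univ, if_true,
        ← Finset.sum_div, Finset.sum_neg_distrib, Finset.sum_const, Finset.card_univ,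
        nsmul_eq_mul, ← Finset.mul_sum]
      ring
    rw [hcalc]
    obtain ⟨v, hv⟩ := Function.ne_iff.1 hz
    exact Finset.sum_pos' (fun _ _ => sq_nonneg _) ⟨v, Finset.mem_univ v, by
      have : z v ≠ 0 := hv
      positivity⟩

/-- Embedding of the free coordinates into all coordinates. -/
noncomputable def rho (G : MixedGraph V) : G.Par → (V × V) ⊕ (V × V) :=
  Sum.elim (fun e => Sum.inl e.1) (fun s => Sum.inr (Quot.out s.1))

/-- Free coordinates of a parameter. -/
noncomputable def coord (G : MixedGraph V) (θ : Matrix V V ℝ × Matrix V V ℝ) : G.Par → ℝ :=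
  fun i => Sum.elim (fun e : V × V => θ.1 e.1 e.2) (fun e => θ.2 e.1 e.2) (G.rho i)

lemma evalParam_rename (G : MixedGraph V) (θ : Matrix V V ℝ × Matrix V V ℝ)
    (p : MvPolynomial G.Par ℝ) :
    evalParam θ (MvPolynomial.rename G.rho p) = MvPolynomial.eval (G.coord θ) p := by
  rw [evalParam, MvPolynomial.eval_rename]
  rfl

lemma Dm_coord (G : MixedGraph V) (θ : Matrix V V ℝ × Matrix V V ℝ) (hθ : θ ∈ G.Theta) :
    (G.Dm fun e => G.coord θ (Sum.inl e)) = θ.1 := by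
  ext v w
  by_cases h : (v, w) ∈ G.D
  · simp [Dm, h, coord, rho]
  · rw [Dm_zero G _ v w h, hθ.1.1 v w h]

lemma Om_coord (G : MixedGraph V) (θ : Matrix V V ℝ × Matrix V V ℝ) (hθ : θ ∈ G.Theta) :
    (G.Om fun e => G.coord θ (Sum.inr e)) = θ.2 := by
  ext v w
  by_cases h : v = w ∨ (v, w) ∈ G.B
  · simp only [Om, Matrix.of_apply, dif_pos h, coord, rho, Sum.elim_inr]
    have h1 : Sym2.mk (Quot.out s(v, w)).1 (Quot.out s(v, w)).2 = s(v, w) := Quot.out_eq _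
    have hs : ∀ a b, θ.2 a b = θ.2 b a := fun a b => by
      have := congrFun (congrFun hθ.2.1.isHermitian b) a
      simpa using this
    rcases Sym2.eq_iff.1 h1 with ⟨ha, hb⟩ | ⟨ha, hb⟩
    · rw [ha, hb]
    · rw [ha, hb, hs]
  · push Not at h
    rw [Om_zero G _ v w h.1 h.2, hθ.2.2 v w h.1 h.2]

lemma coord_mats (G : MixedGraph V) (x : G.Par → ℝ) :
    G.coord (G.Dm fun e => x (Sum.inl e), G.Om fun e => x (Sum.inr e)) = x := by
  funext i
  rcases i with e | s
  · simp [coord, rho, Dm]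
  · simp only [coord, rho, Sum.elim_inr, Om, Matrix.of_apply]
    have h1 : Sym2.mk (Quot.out s.1).1 (Quot.out s.1).2 = s.1 := Quot.out_eq _
    have h2 : (Quot.out s.1).1 = (Quot.out s.1).2 ∨
        ((Quot.out s.1).1, (Quot.out s.1).2) ∈ G.B := by
      obtain ⟨v, w, hs, hvw⟩ := s.2
      have h3 := h1.trans hs
      rcases Sym2.eq_iff.1 h3 with ⟨ha, hb⟩ | ⟨ha, hb⟩
      · rw [ha, hb]; exact hvw
      · rw [ha, hb]; exact hvw.imp Eq.symm (G.B_symm _ _)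
    rw [dif_pos h2]
    congr 2
    exact Subtype.ext h1

end MixedGraph
namespace MixedGraph

variable {V : Type*} [Fintype V] [DecidableEq V]

lemma field_eq (G : MixedGraph V) (A : G.D → MvPolynomial G.Par ℝ)
    (hA : ∀ v w, v ≠ w → (v, w) ∉ G.B →
      (G.OX * (1 - G.LX).adjugate * G.Dm A) v w + (G.OX * (1 - G.LX).adjugate * G.Dm A) w v = 0)
    (x : G.Par → ℝ) (hx : (1 - G.Dm fun e => x (Sum.inl e)).det ≠ 0) :
    (G.Om fun s => MvPolynomial.eval x (G.field A (Sum.inr s))) =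
      -((G.Om fun s => x (Sum.inr s)) * (1 - G.Dm fun e => x (Sum.inl e))⁻¹ *
          (G.Dm fun e => MvPolynomial.eval x (G.field A (Sum.inl e))) +
        ((G.Om fun s => x (Sum.inr s)) * (1 - G.Dm fun e => x (Sum.inl e))⁻¹ *
          (G.Dm fun e => MvPolynomial.eval x (G.field A (Sum.inl e))))ᵀ) := by
  set T := G.OX * (1 - G.LX).adjugate * G.Dm A with hT
  have h1 : (G.Om fun s => G.field A (Sum.inr s)) = -(T + Tᵀ) := by
    ext1 v w
    by_cases h : v = w ∨ (v, w) ∈ G.B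
    · simp only [Om, Matrix.of_apply, dif_pos h]
      rfl
    · push Not at h
      rw [Om_zero G _ v w h.1 h.2]
      simp [hA v w h.1 h.2]
  have h2 : (G.Om fun s => MvPolynomial.eval x (G.field A (Sum.inr s))) =
      -(T.map (MvPolynomial.eval x) + (T.map (MvPolynomial.eval x))ᵀ) := by
    rw [← Om_map G (fun s => G.field A (Sum.inr s)) (MvPolynomial.eval x), h1]
    ext v w
    simp
  have h3 : T.map (MvPolynomial.eval x) =
      (G.Om fun s => x (Sum.inr s)) * (1 - G.Dm fun e => x (Sum.inl e)).adjugate *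
        (G.Dm fun e => MvPolynomial.eval x (A e)) := by
    rw [hT, Matrix.map_mul, Matrix.map_mul, OX_map, Dm_map]
    congr 2
    rw [← one_sub_LX_map]
    exact RingHom.map_adjugate (MvPolynomial.eval x) (1 - G.LX)
  have h4 : (G.Dm fun e => MvPolynomial.eval x (G.field A (Sum.inl e))) =
      (1 - G.Dm fun e => x (Sum.inl e)).det • (G.Dm fun e => MvPolynomial.eval x (A e)) := by
    ext v w
    by_cases h : (v, w) ∈ G.D
    · simp [Dm, h, field]
      left
      exact G.eval_det x
    · rw [Dm_zero G _ v w h]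
      simp [Dm_zero G _ v w h]
  rw [h2, h3, h4, Matrix.inv_def, Ring.inverse_eq_inv', Matrix.mul_smul, Matrix.mul_smul,
    Matrix.smul_mul, smul_smul, mul_inv_cancel₀ hx, one_smul]

lemma infinite_fiber (G : MixedGraph V) (A : G.D → MvPolynomial G.Par ℝ)
    (hA : ∀ v w, v ≠ w → (v, w) ∉ G.B →
      (G.OX * (1 - G.LX).adjugate * G.Dm A) v w + (G.OX * (1 - G.LX).adjugate * G.Dm A) w v = 0)
    (e : G.D) (θ : Matrix V V ℝ × Matrix V V ℝ) (hθ : θ ∈ G.Theta)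
    (hne : MvPolynomial.eval (G.coord θ) ((1 - G.LX).det * A e) ≠ 0) :
    {θ' ∈ G.Theta | phi θ'.1 θ'.2 = phi θ.1 θ.2}.Infinite := by
  let F : (G.Par → ℝ) → (G.Par → ℝ) := fun x i => MvPolynomial.eval x (G.field A i)
  have hF : ContDiff ℝ 1 F := contDiff_pi.2 fun i =>
    (AnalyticOnNhd.eval_mvPolynomial (𝕜 := ℝ) (G.field A i)).contDiff
  obtain ⟨γ, hγ0, ε, hε, hγ⟩ :=
    hF.contDiffAt.exists_forall_mem_closedBall_exists_eq_forall_mem_Ioo_hasDerivAt₀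
      (x₀ := G.coord θ) 0
  simp only [zero_sub, zero_add] at hγ
  let Lc : ℝ → Matrix V V ℝ := fun t => G.Dm fun e => γ t (Sum.inl e)
  let Oc : ℝ → Matrix V V ℝ := fun t => G.Om fun s => γ t (Sum.inr s)
  have hL0 : Lc 0 = θ.1 := by simp only [Lc, hγ0, Dm_coord G θ hθ]
  have hO0 : Oc 0 = θ.2 := by simp only [Oc, hγ0, Om_coord G θ hθ]
  have hγi : ∀ t ∈ Set.Ioo (-ε) ε, ∀ i, HasDerivAt (fun s => γ s i) (F (γ t) i) t :=
    fun t ht i => (hasDerivAt_pi.1 (hγ t ht)) i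
  have hLd : ∀ t ∈ Set.Ioo (-ε) ε, MHas Lc (G.Dm fun e => F (γ t) (Sum.inl e)) t := by
    intro t ht v w
    by_cases h : (v, w) ∈ G.D
    · simpa [Lc, Dm, h] using hγi t ht (Sum.inl ⟨(v, w), h⟩)
    · simpa [Lc, Dm, h] using hasDerivAt_const t (0 : ℝ)
  have hOd : ∀ t ∈ Set.Ioo (-ε) ε, MHas Oc (G.Om fun s => F (γ t) (Sum.inr s)) t := by
    intro t ht v w
    by_cases h : v = w ∨ (v, w) ∈ G.B
    · simpa [Oc, Om, h] using hγi t ht (Sum.inr ⟨s(v, w), v, w, rfl, h⟩)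
    · simpa [Oc, Om, h] using hasDerivAt_const t (0 : ℝ)
  have h0mem : (0 : ℝ) ∈ Set.Ioo (-ε) ε := ⟨by linarith, hε⟩
  have hQd : ∀ t ∈ Set.Ioo (-ε) ε, ∀ i j, DifferentiableAt ℝ (fun s => (1 - Lc s) i j) t := by
    intro t ht i j
    exact ((hLd t ht i j).differentiableAt).const_sub ((1 : Matrix V V ℝ) i j)
  have hev : ∀ᶠ t in nhds (0 : ℝ), (1 - Lc t).det ≠ 0 := by
    refine (differentiableAt_det (hQd 0 h0mem)).continuousAt.eventually_ne ?_
    rw [hL0]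
    exact hθ.1.2.ne_zero
  obtain ⟨δ', hδ', hball⟩ := Metric.eventually_nhds_iff.1 hev
  set δ := min δ' ε with hδdef
  have hδ : 0 < δ := lt_min hδ' hε
  let I := Set.Ioo (-δ) δ
  have hI0 : (0 : ℝ) ∈ I := ⟨by linarith, hδ⟩
  have hIε : ∀ t ∈ I, t ∈ Set.Ioo (-ε) ε := fun t ht =>
    ⟨by linarith [ht.1, min_le_right δ' ε], by linarith [ht.2, min_le_right δ' ε]⟩
  have hIdet : ∀ t ∈ I, (1 - Lc t).det ≠ 0 := fun t ht => by
    apply hball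
    rw [Real.dist_eq, sub_zero, abs_lt]
    exact ⟨by linarith [ht.1, min_le_left δ' ε], by linarith [ht.2, min_le_left δ' ε]⟩
  have hphid : ∀ t ∈ I, MHas (fun s => phi (Lc s) (Oc s)) 0 t := fun t ht =>
    phi_hasDeriv (hLd t (hIε t ht)) (hOd t (hIε t ht)) (hIdet t ht) (Om_transpose G _)
      (field_eq G A hA (γ t) (hIdet t ht))
  have hphi : ∀ t ∈ I, phi (Lc t) (Oc t) = phi θ.1 θ.2 := by
    intro t ht
    rw [← hL0, ← hO0]
    ext i j
    exact isOpen_Ioo.is_const_of_deriv_eq_zero isPreconnected_Ioo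
      (f := fun s => phi (Lc s) (Oc s) i j)
      (fun s hs => (hphid s hs i j).differentiableAt.differentiableWithinAt)
      (fun s hs => (hphid s hs i j).deriv) ht hI0
  have hback : ∀ L O : Matrix V V ℝ, (1 - L).det ≠ 0 → (1 - L)ᵀ * phi L O * (1 - L) = O := by
    intro L O hdet
    have hu : IsUnit (1 - L).det := isUnit_iff_ne_zero.2 hdet
    have h1 : (1 - L)ᵀ * ((1 - L)⁻¹)ᵀ = 1 := by
      rw [← Matrix.transpose_mul, Matrix.nonsing_inv_mul _ hu, Matrix.transpose_one]
    calc (1 - L)ᵀ * phi L O * (1 - L)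
        = ((1 - L)ᵀ * ((1 - L)⁻¹)ᵀ) * O * ((1 - L)⁻¹ * (1 - L)) := by
          simp only [phi, Matrix.mul_assoc]
      _ = O := by rw [h1, Matrix.nonsing_inv_mul _ hu, Matrix.one_mul, Matrix.mul_one]
  have hpd0 : (phi θ.1 θ.2).PosDef := by
    have h1 : IsUnit ((1 - θ.1)⁻¹) :=
      (Matrix.isUnit_iff_isUnit_det _).2 (Matrix.isUnit_nonsing_inv_det _ hθ.1.2)
    have := hθ.2.1.conjTranspose_mul_mul_same (Matrix.mulVec_injective_of_isUnit h1)
    rwa [Matrix.conjTranspose_eq_transpose_of_trivial] at this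
  have hmem : ∀ t ∈ I, (Lc t, Oc t) ∈ {θ' ∈ G.Theta | phi θ'.1 θ'.2 = phi θ.1 θ.2} := by
    intro t ht
    refine ⟨⟨⟨fun v w h => Dm_zero G (fun e => γ t (Sum.inl e)) v w h, isUnit_iff_ne_zero.2 (hIdet t ht)⟩, ?_, fun v w h1 h2 => Om_zero G (fun s => γ t (Sum.inr s)) v w h1 h2⟩, hphi t ht⟩
    have h1 : IsUnit (1 - Lc t) :=
      (Matrix.isUnit_iff_isUnit_det _).2 (isUnit_iff_ne_zero.2 (hIdet t ht))
    have h2 := hpd0.conjTranspose_mul_mul_same (Matrix.mulVec_injective_of_isUnit h1)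
    rw [Matrix.conjTranspose_eq_transpose_of_trivial, ← hphi t ht, hback _ _ (hIdet t ht)] at h2
    exact h2
  -- the curve takes infinitely many values
  have hinf : ((fun t => γ t (Sum.inl e)) '' I).Infinite := by
    have hcont : ContinuousOn (fun t => γ t (Sum.inl e)) I := fun t ht =>
      (hγi t (hIε t ht) (Sum.inl e)).continuousAt.continuousWithinAt
    refine (isPreconnected_Ioo.image _ hcont).infinite_of_nontrivial ?_
    have hd := hγi 0 h0mem (Sum.inl e)
    have hd0 : F (γ 0) (Sum.inl e) ≠ 0 := by rw [hγ0]; exact hne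
    have hev1 := hd.eventually_ne (c := γ 0 (Sum.inl e)) hd0
    have hev2 : ∀ᶠ t in nhdsWithin (0 : ℝ) {0}ᶜ, t ∈ I :=
      nhdsWithin_le_nhds (isOpen_Ioo.mem_nhds hI0)
    obtain ⟨t, ht1, ht2⟩ := (hev1.and hev2).exists
    exact ⟨_, ⟨t, ht2, rfl⟩, _, ⟨0, hI0, rfl⟩, ht1⟩
  refine Set.Infinite.of_image (fun θ' => θ'.1 e.1.1 e.1.2) (hinf.mono ?_)
  rintro _ ⟨t, ht, rfl⟩
  refine ⟨_, hmem t ht, ?_⟩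
  simp [Lc, Dm]

end MixedGraph

/-- **HTC-nonidentifiability** (Theorem 2): if every family `(Y v : v ∈ V)` of subsets of
the vertex set either contains a set `Y v` failing the half-trek criterion with respect to
`v`, or contains a pair `(Y v, Y w)` with `v ∈ Y w` and `w ∈ Y v`, then the parametrization
`φ_G` is generically infinite-to-one. -/
theorem htc_nonidentifiability {V : Type*} [Fintype V] [DecidableEq V] (G : MixedGraph V)
    (h : ∀ Y : V → Finset V,
      (∃ v, ¬ G.SatisfiesHTC v (Y v)) ∨ ∃ v w, v ∈ Y w ∧ w ∈ Y v) :
    G.GenInfiniteToOne := by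
  obtain ⟨A, hA0, hA⟩ := G.exists_kernel h
  obtain ⟨e, he⟩ := Function.ne_iff.1 hA0
  have hp : (1 - G.LX).det * A e ≠ 0 := mul_ne_zero G.det_LX_ne_zero he
  refine ⟨_, ⟨MvPolynomial.rename G.rho ((1 - G.LX).det * A e), ?_, rfl⟩, ?_⟩
  · obtain ⟨x, hx, hpd⟩ := G.exists_posDef_nonvanishing _ hp
    refine ⟨(G.Dm fun e => x (Sum.inl e), G.Om fun e => x (Sum.inr e)),
      ⟨⟨fun v w h => MixedGraph.Dm_zero G (fun e => x (Sum.inl e)) v w h, ?_⟩, hpd, fun v w h1 h2 => MixedGraph.Om_zero G (fun e => x (Sum.inr e)) v w h1 h2⟩, ?_⟩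
    · rw [map_mul, MixedGraph.eval_det] at hx
      exact isUnit_iff_ne_zero.2 (left_ne_zero_of_mul hx)
    · rw [MixedGraph.evalParam_rename, MixedGraph.coord_mats]
      exact hx
  · rintro θ ⟨hθ, hθ'⟩
    refine G.infinite_fiber A hA e θ hθ fun h0 => hθ' ⟨hθ, ?_⟩
    rw [MixedGraph.evalParam_rename]
    exact h0
end
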